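/- arXiv:2509.22076 — 3 statements merged into one kernel-verified Lean document; each statement's English description precedes it below -/
import Mathlib

section
/- Let z̄ ∈ PC¹(D̄) and x₀ ∈ ℝ, and define on D̄_j: Ā^{(z̄,x₀),j}(t,x̄) = (A(z̄(t,x̄)) − x_t^{(z̄,x₀),j}(t,x̄) I)(x_x̄^{(z̄,x₀),j}(t,x̄))⁻¹ and ḡ^{(z̄,x₀),j}(t,x̄,ȳ) = g(t, x^{(z̄,x₀),j}(t,x̄), ȳ). If ȳ ∈ C¹(D̄_j;ℝⁿ) is a classical solution of ȳ_t + Ā^{(z̄,x₀),j} ȳ_x̄ = ḡ^{(z̄,x₀),j}(·,ȳ) on D̄_j, then y(t,x) = ȳ(t, x̄^{(z̄,x₀),j}(t,x)) is a classical C¹ solution of y_t + A(z) y_x = g(·,y) on the physical sector D_j^{(z̄,x₀)} bounded by the curves ξ_j^{(z̄,x₀)} and ξ_{j+1}^{(z̄,x₀)} (respectively ξ_ℓ^{(z̄,x₀)}, ξ₁^{(z̄,x₀)} for j = 0 and ξₙ^{(z̄,x₀)}, ξ_r^{(z̄,x₀)} for j = n), where z(t,x) = z̄(t, x̄^{(z̄,x₀),j}(t,x));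 the converse implication also holds. If moreover the smallness assumptions hold, then each matrix Ā^{(z̄,x₀),j}(t,x̄) is strictly hyperbolic. -/
open Set MeasureTheory intervalIntegral
open scoped RealInnerProductSpace BoundedContinuousFunction Classical

noncomputable section

/-- The state space `ℝ^{n+1}` (the system has dimension `n+1 ≥ 1`). -/
abbrev Rd (n : ℕ) : Type := EuclideanSpace ℝ (Fin (n + 1))

/-- Piecewise data on the reference space: one function per sector `D̄_j`, `j = 0, …, n+1`. -/
abbrev Comp (n : ℕ) : Type := Fin (n + 2) → ℝ × ℝ → Rd n

/-- The fixed data of the Generalized Riemann Problem in the reference space: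
time horizon `T`, half-length `ℓ`, maximal characteristic speed `lmax`,
reference shock speeds `s`, eigenvalues `lam` and (normalized) left/right eigenvectors
`lvec`, `rvec` of `A(y) = f'(y)`, the corresponding data `lam2`, `l2vec`, `r2vec` of the
averaged matrix `A(y₁,y₂) = ∫₀¹ A(σy₁+(1-σ)y₂)dσ`, the flux `f` and the source `g`. -/
structure Ctx (n : ℕ) where
  T : ℝ
  ℓ : ℝ
  lmax : ℝ
  s : Fin (n + 1) → ℝ
  lam : Rd n → Fin (n + 1) → ℝ
  lam2 : Rd n → Rd n → Fin (n + 1) → ℝ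
  lvec : Rd n → Fin (n + 1) → Rd n
  rvec : Rd n → Fin (n + 1) → Rd n
  l2vec : Rd n → Rd n → Fin (n + 1) → Rd n
  r2vec : Rd n → Rd n → Fin (n + 1) → Rd n
  f : Rd n → Rd n
  g : ℝ → ℝ → Rd n → Rd n

namespace Ctx

variable {n : ℕ} (C : Ctx n)

/-- Standing structural hypotheses: strict hyperbolicity with normalized eigen data,
both for `A(y) = f'(y)` and for the averaged matrix `A(y₁,y₂)`. -/
structure IsHyperbolicData : Prop where
  hT : 0 < C.T
  hl : 0 < C.ℓ
  hlmax : 0 < C.lmax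
  hsMono : StrictMono C.s
  hsBound : ∀ k, |C.s k| ≤ C.lmax
  hf : ContDiff ℝ 2 C.f
  hlamMono : ∀ y, StrictMono (C.lam y)
  hlamBound : ∀ y i, |C.lam y i| ≤ C.lmax
  hEig : ∀ y i, fderiv ℝ C.f y (C.rvec y i) = C.lam y i • C.rvec y i
  hEigL : ∀ y i v, ⟪C.lvec y i, fderiv ℝ C.f y v⟫ = C.lam y i * ⟪C.lvec y i, v⟫
  hrNorm : ∀ y i, ‖C.rvec y i‖ = 1
  hlr : ∀ y i k, ⟪C.lvec y i, C.rvec y k⟫ = if i = k then (1 : ℝ) else 0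
  hlam2Mono : ∀ y₁ y₂, StrictMono (C.lam2 y₁ y₂)
  hlam2Bound : ∀ y₁ y₂ i, |C.lam2 y₁ y₂ i| ≤ C.lmax
  hEig2 : ∀ y₁ y₂ i,
    (∫ σ in (0:ℝ)..1, fderiv ℝ C.f (σ • y₁ + (1 - σ) • y₂) (C.r2vec y₁ y₂ i)) =
      C.lam2 y₁ y₂ i • C.r2vec y₁ y₂ i
  hEig2L : ∀ y₁ y₂ i v,
    ⟪C.l2vec y₁ y₂ i, ∫ σ in (0:ℝ)..1, fderiv ℝ C.f (σ • y₁ + (1 - σ) • y₂) v⟫ =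
      C.lam2 y₁ y₂ i * ⟪C.l2vec y₁ y₂ i, v⟫
  hr2Norm : ∀ y₁ y₂ i, ‖C.r2vec y₁ y₂ i‖ = 1
  hl2r2 : ∀ y₁ y₂ i k, ⟪C.l2vec y₁ y₂ i, C.r2vec y₁ y₂ k⟫ = if i = k then (1 : ℝ) else 0

/-- The sector `D̄_j` of the reference space, `j = 0, …, n+1`. -/
def sector (j : Fin (n + 2)) : Set (ℝ × ℝ) :=
  {p | p.1 ∈ Icc (0 : ℝ) C.T ∧
    (if h1 : (j : ℕ) = 0 then -C.ℓ + C.lmax * p.1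
      else C.s ⟨(j : ℕ) - 1, by have := j.isLt; omega⟩ * p.1) ≤ p.2 ∧
    p.2 ≤ if h2 : (j : ℕ) = n + 1 then C.ℓ - C.lmax * p.1
      else C.s ⟨(j : ℕ), by have := j.isLt; omega⟩ * p.1}

/-- `ȳ` is piecewise continuous: each component is continuous on its sector. -/
def IsPC0 (ybar : Comp n) : Prop := ∀ j, ContinuousOn (ybar j) (C.sector j)

/-- `ȳ` is piecewise `C¹`: each component is `C¹` on its sector. -/
def IsPC1 (ybar : Comp n) : Prop := ∀ j, ContDiffOn ℝ 1 (ybar j) (C.sector j)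

/-- `PC⁰`-sup of piecewise data (the `PC⁰(D̄)`-norm). -/
def pcSup (ys : Comp n) : ℝ :=
  ⨆ j : Fin (n + 2), ⨆ p : C.sector j, ‖ys j p.1‖

/-- `PC⁰`-sup of piecewise data up to time `t` (the `PC⁰(D̄ᵗ)`-norm). -/
def pcSupT (t : ℝ) (ys : Comp n) : ℝ :=
  ⨆ j : Fin (n + 2),
    ⨆ p : (C.sector j ∩ {q : ℝ × ℝ | q.1 ≤ t} : Set (ℝ × ℝ)), ‖ys j p.1‖

/-- `ȳ` is bounded by `Cb` in the `PC¹(D̄)`-norm. -/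
def PC1BoundedBy (ybar : Comp n) (Cb : ℝ) : Prop :=
  ∀ j, ∀ p ∈ C.sector j,
    ‖ybar j p‖ ≤ Cb ∧ ‖fderivWithin ℝ (ybar j) (C.sector j) p‖ ≤ Cb

/-- The left boundary curve `ξ_ℓ^{(ȳ,x₀)}`. -/
def xiL (ybar : Comp n) (t : ℝ) : ℝ :=
  -C.ℓ + ∫ τ in (0:ℝ)..t, C.lam (ybar 0 (τ, -C.ℓ + C.lmax * τ)) (Fin.last n)

/-- The right boundary curve `ξ_r^{(ȳ,x₀)}`. -/
def xiR (ybar : Comp n) (t : ℝ) : ℝ :=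
  C.ℓ + ∫ τ in (0:ℝ)..t, C.lam (ybar (Fin.last (n + 1)) (τ, C.ℓ - C.lmax * τ)) 0

/-- The `k`-th shock curve `ξ_k^{(ȳ,x₀)}` (`k = 0, …, n` indexes the `n+1` shocks). -/
def xiS (x₀ : ℝ) (ybar : Comp n) (k : Fin (n + 1)) (t : ℝ) : ℝ :=
  x₀ + ∫ τ in (0:ℝ)..t,
    C.lam2 (ybar k.castSucc (τ, C.s k * τ)) (ybar k.succ (τ, C.s k * τ)) k

/-- The state-dependent space transformation `x^{(ȳ,x₀),j}` from the reference
space to physical coordinates (linear interpolation between consecutive curves). -/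
def xTrafo (x₀ : ℝ) (ybar : Comp n) (j : Fin (n + 2)) (p : ℝ × ℝ) : ℝ :=
  if h1 : (j : ℕ) = 0 then
    ((p.2 - (-C.ℓ + C.lmax * p.1)) * C.xiS x₀ ybar 0 p.1
        + (C.s 0 * p.1 - p.2) * C.xiL ybar p.1)
      / (C.s 0 * p.1 - (-C.ℓ + C.lmax * p.1))
  else if h2 : (j : ℕ) = n + 1 then
    ((p.2 - C.s (Fin.last n) * p.1) * C.xiR ybar p.1
        + ((C.ℓ - C.lmax * p.1) - p.2) * C.xiS x₀ ybar (Fin.last n) p.1)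
      / ((C.ℓ - C.lmax * p.1) - C.s (Fin.last n) * p.1)
  else if p.1 = 0 then x₀
  else
    ((p.2 - C.s ⟨(j : ℕ) - 1, by have := j.isLt; omega⟩ * p.1) *
        C.xiS x₀ ybar ⟨(j : ℕ), by have := j.isLt; omega⟩ p.1
      + (C.s ⟨(j : ℕ), by have := j.isLt; omega⟩ * p.1 - p.2) *
        C.xiS x₀ ybar ⟨(j : ℕ) - 1, by have := j.isLt; omega⟩ p.1)
      / ((C.s ⟨(j : ℕ), by have := j.isLt; omega⟩ -
          C.s ⟨(j : ℕ) - 1, by have := j.isLt; omega⟩) * p.1)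

/-- The inverse space transformation `x̄^{(ȳ,x₀),j}` from physical coordinates
to the reference space. -/
def xbarTrafo (x₀ : ℝ) (ybar : Comp n) (j : Fin (n + 2)) (p : ℝ × ℝ) : ℝ :=
  if h1 : (j : ℕ) = 0 then
    ((p.2 - C.xiL ybar p.1) * (C.s 0 * p.1)
        + (C.xiS x₀ ybar 0 p.1 - p.2) * (-C.ℓ + C.lmax * p.1))
      / (C.xiS x₀ ybar 0 p.1 - C.xiL ybar p.1)
  else if h2 : (j : ℕ) = n + 1 then
    ((p.2 - C.xiS x₀ ybar (Fin.last n) p.1) * (C.ℓ - C.lmax * p.1)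
        + (C.xiR ybar p.1 - p.2) * (C.s (Fin.last n) * p.1))
      / (C.xiR ybar p.1 - C.xiS x₀ ybar (Fin.last n) p.1)
  else if p.1 = 0 then 0
  else
    ((p.2 - C.xiS x₀ ybar ⟨(j : ℕ) - 1, by have := j.isLt; omega⟩ p.1) *
        (C.s ⟨(j : ℕ), by have := j.isLt; omega⟩ * p.1)
      + (C.xiS x₀ ybar ⟨(j : ℕ), by have := j.isLt; omega⟩ p.1 - p.2) *
        (C.s ⟨(j : ℕ) - 1, by have := j.isLt; omega⟩ * p.1))
      / (C.xiS x₀ ybar ⟨(j : ℕ), by have := j.isLt; omega⟩ p.1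
          - C.xiS x₀ ybar ⟨(j : ℕ) - 1, by have := j.isLt; omega⟩ p.1)

/-- The `j`-th sector in physical coordinates, `D_j^{(ȳ,x₀)}`. -/
def physSector (x₀ : ℝ) (ybar : Comp n) (j : Fin (n + 2)) : Set (ℝ × ℝ) :=
  {p | p.1 ∈ Icc (0 : ℝ) C.T ∧
    (if h1 : (j : ℕ) = 0 then C.xiL ybar p.1
      else C.xiS x₀ ybar ⟨(j : ℕ) - 1, by have := j.isLt; omega⟩ p.1) ≤ p.2 ∧
    p.2 ≤ if h2 : (j : ℕ) = n + 1 then C.xiR ybar p.1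
      else C.xiS x₀ ybar ⟨(j : ℕ), by have := j.isLt; omega⟩ p.1}

/-- The transformed coefficient matrix
`Ā^{(z̄,x₀),j} = (A(z̄) - x_t^{(z̄,x₀),j} I) (x_x̄^{(z̄,x₀),j})⁻¹` acting on a vector `v`. -/
def AbarOp (x₀ : ℝ) (zbar : Comp n) (j : Fin (n + 2)) (p : ℝ × ℝ) (v : Rd n) : Rd n :=
  (fderivWithin ℝ (C.xTrafo x₀ zbar j) (C.sector j) p (0, 1))⁻¹ •
    (fderiv ℝ C.f (zbar j p) v -
      fderivWithin ℝ (C.xTrafo x₀ zbar j) (C.sector j) p (1, 0) • v)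

/-- The eigenvalue fields `λ̄_i^{(z̄,x₀)}` of the transformed matrix `Ā^{(z̄,x₀)}`,
`λ̄_i = x̄_t + x̄_x λ_i(z̄)` evaluated at the corresponding physical point. -/
def lamBarQ (x₀ : ℝ) (zbar : Comp n) (j : Fin (n + 2)) (p : ℝ × ℝ) (i : Fin (n + 1)) : ℝ :=
  fderivWithin ℝ (C.xbarTrafo x₀ zbar j) (C.physSector x₀ zbar j)
    (p.1, C.xTrafo x₀ zbar j p) (1, C.lam (zbar j p) i)

/-- The minimal-angle property for a family of characteristic speed fields. -/
def MinAngle (lamBar : Fin (n + 2) → ℝ × ℝ → Fin (n + 1) → ℝ) (η : ℝ) : Prop :=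
  ∀ j, ∀ p ∈ C.sector j, ∀ i k : Fin (n + 1), i ≠ k →
    η ≤ |lamBar j p i - lamBar j p k|

/-- The entropy condition on all transformed shocks `Σ_k`. -/
def EntropyCond (lamBar : Fin (n + 2) → ℝ × ℝ → Fin (n + 1) → ℝ) : Prop :=
  ∀ k : Fin (n + 1), ∀ t ∈ Icc (0 : ℝ) C.T,
    lamBar k.castSucc (t, C.s k * t) k ≥ C.s k ∧
    C.s k ≥ lamBar k.succ (t, C.s k * t) k ∧
    (∀ i : Fin (n + 1), (i : ℕ) < (k : ℕ) →
      lamBar k.castSucc (t, C.s k * t) i < C.s k ∧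
      lamBar k.succ (t, C.s k * t) i < C.s k) ∧
    (∀ i : Fin (n + 1), (k : ℕ) < (i : ℕ) →
      C.s k < lamBar k.castSucc (t, C.s k * t) i ∧
      C.s k < lamBar k.succ (t, C.s k * t) i)

/-- Characteristic component `ȳ_i^j = l_i(z̄^j)ᵀ ȳ^j`. -/
def charComp (zbar ybar : Comp n) (j : Fin (n + 2)) (i : Fin (n + 1)) (p : ℝ × ℝ) : ℝ :=
  ⟪C.lvec (zbar j p) i, ybar j p⟫

/-- The transformed characteristic source term
`h̄_i(ȳ) = l_i(z̄)ᵀ h̄(ȳ) + (∂_t l_i(z̄) + λ̄_i ∂_x̄ l_i(z̄))ᵀ ȳ`. -/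
def hbarChar (zbar : Comp n) (lamBar : Fin (n + 2) → ℝ × ℝ → Fin (n + 1) → ℝ)
    (hbar : Comp n → Comp n) (ybar : Comp n) (j : Fin (n + 2)) (i : Fin (n + 1))
    (p : ℝ × ℝ) : ℝ :=
  ⟪C.lvec (zbar j p) i, hbar ybar j p⟫ +
    ⟪fderivWithin ℝ (fun q => C.lvec (zbar j q) i) (C.sector j) p (1, lamBar j p i),
      ybar j p⟫

/-- Broad solution of the semilinear system
`ȳ_t + Ā^{(z̄,x₀)} ȳ_x̄ = h̄(ȳ)`, `ȳ⁰(0,·) = u_l`, `ȳ^{n+1}(0,·) = u_r`,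
with interior boundary conditions `F i k` on the transformed shocks `Σ_k`:
the characteristic components satisfy the integral equations along every
characteristic curve `χ` of the speed field `lamBar`, with data transported
from `t = 0` on the outer sectors and from the incoming shock in the middle
sectors (`F i k (t, v, v¹, v²)`; `v` the incoming characteristic component,
`v¹`/`v²` the states left/right of the shock `k`). -/
def IsBroadSol (zbar : Comp n) (lamBar : Fin (n + 2) → ℝ × ℝ → Fin (n + 1) → ℝ)
    (hbar : Comp n → Comp n)
    (F : Fin (n + 1) → Fin (n + 1) → ℝ → ℝ → Rd n → Rd n → ℝ)
    (ul ur : ℝ → Rd n) (ybar : Comp n) : Prop :=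
  C.IsPC0 ybar ∧
  (∀ i, ∀ p ∈ C.sector 0, ∀ χ : ℝ → ℝ, χ p.1 = p.2 →
    (∀ τ ∈ Icc (0 : ℝ) p.1,
      HasDerivAt χ (lamBar 0 (τ, χ τ) i) τ ∧ (τ, χ τ) ∈ C.sector 0) →
    C.charComp zbar ybar 0 i p =
      ⟪C.lvec (zbar 0 (0, χ 0)) i, ul (χ 0)⟫ +
        ∫ τ in (0 : ℝ)..p.1, C.hbarChar zbar lamBar hbar ybar 0 i (τ, χ τ)) ∧
  (∀ i, ∀ p ∈ C.sector (Fin.last (n + 1)), ∀ χ : ℝ → ℝ, χ p.1 = p.2 →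
    (∀ τ ∈ Icc (0 : ℝ) p.1,
      HasDerivAt χ (lamBar (Fin.last (n + 1)) (τ, χ τ) i) τ ∧
        (τ, χ τ) ∈ C.sector (Fin.last (n + 1))) →
    C.charComp zbar ybar (Fin.last (n + 1)) i p =
      ⟪C.lvec (zbar (Fin.last (n + 1)) (0, χ 0)) i, ur (χ 0)⟫ +
        ∫ τ in (0 : ℝ)..p.1,
          C.hbarChar zbar lamBar hbar ybar (Fin.last (n + 1)) i (τ, χ τ)) ∧
  (∀ j : Fin (n + 2), ∀ hj1 : (j : ℕ) ≠ 0, ∀ hj2 : (j : ℕ) ≠ n + 1,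
    ∀ i : Fin (n + 1), ∀ p ∈ C.sector j, ∀ χ : ℝ → ℝ, ∀ t₀ ∈ Icc (0 : ℝ) p.1,
    χ p.1 = p.2 →
    (∀ τ ∈ Icc t₀ p.1,
      HasDerivAt χ (lamBar j (τ, χ τ) i) τ ∧ (τ, χ τ) ∈ C.sector j) →
    (((j : ℕ) ≤ (i : ℕ)) →
      χ t₀ = C.s ⟨(j : ℕ) - 1, by have := j.isLt; omega⟩ * t₀ →
      C.charComp zbar ybar j i p =
        F i ⟨(j : ℕ) - 1, by have := j.isLt; omega⟩ t₀
          (C.charComp zbar ybar ⟨(j : ℕ) - 1, by have := j.isLt; omega⟩ i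
            (t₀, C.s ⟨(j : ℕ) - 1, by have := j.isLt; omega⟩ * t₀))
          (ybar ⟨(j : ℕ) - 1, by have := j.isLt; omega⟩
            (t₀, C.s ⟨(j : ℕ) - 1, by have := j.isLt; omega⟩ * t₀))
          (ybar j (t₀, C.s ⟨(j : ℕ) - 1, by have := j.isLt; omega⟩ * t₀)) +
          ∫ τ in t₀..p.1, C.hbarChar zbar lamBar hbar ybar j i (τ, χ τ)) ∧
    (((i : ℕ) < (j : ℕ)) →
      χ t₀ = C.s ⟨(j : ℕ), by have := j.isLt; omega⟩ * t₀ →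
      C.charComp zbar ybar j i p =
        F i ⟨(j : ℕ), by have := j.isLt; omega⟩ t₀
          (C.charComp zbar ybar ⟨(j : ℕ) + 1, by have := j.isLt; omega⟩ i
            (t₀, C.s ⟨(j : ℕ), by have := j.isLt; omega⟩ * t₀))
          (ybar j (t₀, C.s ⟨(j : ℕ), by have := j.isLt; omega⟩ * t₀))
          (ybar ⟨(j : ℕ) + 1, by have := j.isLt; omega⟩
            (t₀, C.s ⟨(j : ℕ), by have := j.isLt; omega⟩ * t₀)) +
          ∫ τ in t₀..p.1, C.hbarChar zbar lamBar hbar ybar j i (τ, χ τ)))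

/-- The Rankine–Hugoniot interior boundary operator `G_i^j` (case of fast fields `i > j`). -/
def Gfast (i : Fin (n + 1)) (v : ℝ) (v1 v2 : Rd n) : ℝ :=
  v + ⟪C.lvec v2 i - C.lvec v1 i, v1⟫ -
    ∑ k ∈ Finset.univ.erase i,
      (⟪C.l2vec v1 v2 i, C.rvec v2 k⟫ / ⟪C.l2vec v1 v2 i, C.rvec v2 i⟫) *
        ⟪C.lvec v2 k, v2 - v1⟫

/-- The Rankine–Hugoniot interior boundary operator `G_i^j` (case of slow fields `i < j`). -/
def Gslow (i : Fin (n + 1)) (v : ℝ) (v1 v2 : Rd n) : ℝ :=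
  v + ⟪C.lvec v1 i - C.lvec v2 i, v2⟫ -
    ∑ k ∈ Finset.univ.erase i,
      (⟪C.l2vec v1 v2 i, C.rvec v1 k⟫ / ⟪C.l2vec v1 v2 i, C.rvec v1 i⟫) *
        ⟪C.lvec v1 k, v1 - v2⟫

/-- The dilation `D_l(u_l, x₀)`. -/
def dilL (x₀ : ℝ) (u : ℝ → Rd n) (x : ℝ) : Rd n := u (x + (x + C.ℓ) / C.ℓ * x₀)

/-- The dilation `D_r(u_r, x₀)`. -/
def dilR (x₀ : ℝ) (u : ℝ → Rd n) (x : ℝ) : Rd n := u (x - (x - C.ℓ) / C.ℓ * x₀)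

/-- `ȳ` is a piecewise-`C¹` solution of the Generalized Riemann Problem in the
reference space: the quasilinear equation `ȳ_t + Ā^{(ȳ,x₀)}ȳ_x̄ = ḡ^{(ȳ,x₀)}`
holds classically on each sector, the dilated initial conditions hold, and the
Rankine–Hugoniot interior boundary conditions hold on each transformed shock. -/
def IsRefSol (x₀ : ℝ) (ul ur : ℝ → Rd n) (ybar : Comp n) : Prop :=
  C.IsPC1 ybar ∧
  (∀ j, ∀ p ∈ C.sector j,
    fderivWithin ℝ (ybar j) (C.sector j) p (1, 0) +
      C.AbarOp x₀ ybar j p (fderivWithin ℝ (ybar j) (C.sector j) p (0, 1)) =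
      C.g p.1 (C.xTrafo x₀ ybar j p) (ybar j p)) ∧
  (∀ x ∈ Icc (-C.ℓ) (0 : ℝ), ybar 0 (0, x) = C.dilL x₀ ul x) ∧
  (∀ x ∈ Icc (0 : ℝ) C.ℓ, ybar (Fin.last (n + 1)) (0, x) = C.dilR x₀ ur x) ∧
  (∀ k : Fin (n + 1), ∀ t ∈ Icc (0 : ℝ) C.T, ∀ i : Fin (n + 1),
    ((k : ℕ) < (i : ℕ) →
      ⟪C.lvec (ybar k.succ (t, C.s k * t)) i, ybar k.succ (t, C.s k * t)⟫ =
        C.Gfast i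
          ⟪C.lvec (ybar k.castSucc (t, C.s k * t)) i, ybar k.castSucc (t, C.s k * t)⟫
          (ybar k.castSucc (t, C.s k * t)) (ybar k.succ (t, C.s k * t))) ∧
    ((i : ℕ) < (k : ℕ) →
      ⟪C.lvec (ybar k.castSucc (t, C.s k * t)) i, ybar k.castSucc (t, C.s k * t)⟫ =
        C.Gslow i
          ⟪C.lvec (ybar k.succ (t, C.s k * t)) i, ybar k.succ (t, C.s k * t)⟫
          (ybar k.castSucc (t, C.s k * t)) (ybar k.succ (t, C.s k * t))))

/-- Membership in the admissible control set `U_ad`. -/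
def InUad (uL uR : Rd n) (M₀ M₁ ε : ℝ) (ul ur : ℝ → Rd n) (x₀ : ℝ) : Prop :=
  ContDiffOn ℝ 1 ul (Icc (-C.ℓ) ε) ∧ ContDiffOn ℝ 1 ur (Icc (-ε) C.ℓ) ∧
  (∀ x ∈ Icc (-C.ℓ) ε, ‖ul x - uL‖ < M₀ ∧ ‖derivWithin ul (Icc (-C.ℓ) ε) x‖ < M₁) ∧
  (∀ x ∈ Icc (-ε) C.ℓ, ‖ur x - uR‖ < M₀ ∧ ‖derivWithin ur (Icc (-ε) C.ℓ) x‖ < M₁) ∧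
  x₀ ∈ Ioo (-ε) ε

/-- Directional (Fréchet) derivative of the shock curve `ξ_k^{(ȳ,x₀)}`
in the direction `(δȳ, δx₀)`. -/
def deltaXiS (ybar δybar : Comp n) (δx₀ : ℝ) (k : Fin (n + 1)) (t : ℝ) : ℝ :=
  δx₀ + ∫ τ in (0 : ℝ)..t,
    fderiv ℝ (fun q : Rd n × Rd n => C.lam2 q.1 q.2 k)
      (ybar k.castSucc (τ, C.s k * τ), ybar k.succ (τ, C.s k * τ))
      (δybar k.castSucc (τ, C.s k * τ), δybar k.succ (τ, C.s k * τ))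

/-- Directional derivative of the left boundary curve `ξ_ℓ^{(ȳ,x₀)}`. -/
def deltaXiL (ybar δybar : Comp n) (t : ℝ) : ℝ :=
  ∫ τ in (0 : ℝ)..t,
    fderiv ℝ (fun y => C.lam y (Fin.last n)) (ybar 0 (τ, -C.ℓ + C.lmax * τ))
      (δybar 0 (τ, -C.ℓ + C.lmax * τ))

/-- Directional derivative of the right boundary curve `ξ_r^{(ȳ,x₀)}`. -/
def deltaXiR (ybar δybar : Comp n) (t : ℝ) : ℝ :=
  ∫ τ in (0 : ℝ)..t,
    fderiv ℝ (fun y => C.lam y 0) (ybar (Fin.last (n + 1)) (τ, C.ℓ - C.lmax * τ))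
      (δybar (Fin.last (n + 1)) (τ, C.ℓ - C.lmax * τ))

/-- Directional derivative `d_{(ȳ,x₀)}x^{(ȳ,x₀),j}·(δȳ,δx₀)` of the space transformation. -/
def deltaXTrafo (ybar δybar : Comp n) (δx₀ : ℝ) (j : Fin (n + 2)) (p : ℝ × ℝ) : ℝ :=
  if h1 : (j : ℕ) = 0 then
    ((p.2 - (-C.ℓ + C.lmax * p.1)) * C.deltaXiS ybar δybar δx₀ 0 p.1
        + (C.s 0 * p.1 - p.2) * C.deltaXiL ybar δybar p.1)
      / (C.s 0 * p.1 - (-C.ℓ + C.lmax * p.1))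
  else if h2 : (j : ℕ) = n + 1 then
    ((p.2 - C.s (Fin.last n) * p.1) * C.deltaXiR ybar δybar p.1
        + ((C.ℓ - C.lmax * p.1) - p.2) * C.deltaXiS ybar δybar δx₀ (Fin.last n) p.1)
      / ((C.ℓ - C.lmax * p.1) - C.s (Fin.last n) * p.1)
  else if p.1 = 0 then δx₀
  else
    ((p.2 - C.s ⟨(j : ℕ) - 1, by have := j.isLt; omega⟩ * p.1) *
        C.deltaXiS ybar δybar δx₀ ⟨(j : ℕ), by have := j.isLt; omega⟩ p.1
      + (C.s ⟨(j : ℕ), by have := j.isLt; omega⟩ * p.1 - p.2) *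
        C.deltaXiS ybar δybar δx₀ ⟨(j : ℕ) - 1, by have := j.isLt; omega⟩ p.1)
      / ((C.s ⟨(j : ℕ), by have := j.isLt; omega⟩ -
          C.s ⟨(j : ℕ) - 1, by have := j.isLt; omega⟩) * p.1)

/-- Directional derivative `d_{(ȳ,x₀)}x̄^{(ȳ,x₀),j}·(δȳ,δx₀)` of the inverse
space transformation, at a physical point `p = (t,x)`. -/
def deltaXbarTrafo (x₀ : ℝ) (ybar δybar : Comp n) (δx₀ : ℝ) (j : Fin (n + 2))
    (p : ℝ × ℝ) : ℝ :=
  if h1 : (j : ℕ) = 0 then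
    (((-(C.deltaXiL ybar δybar p.1)) * (C.s 0 * p.1) +
        C.deltaXiS ybar δybar δx₀ 0 p.1 * (-C.ℓ + C.lmax * p.1)) *
        (C.xiS x₀ ybar 0 p.1 - C.xiL ybar p.1) -
      ((p.2 - C.xiL ybar p.1) * (C.s 0 * p.1) +
        (C.xiS x₀ ybar 0 p.1 - p.2) * (-C.ℓ + C.lmax * p.1)) *
        (C.deltaXiS ybar δybar δx₀ 0 p.1 - C.deltaXiL ybar δybar p.1))
      / (C.xiS x₀ ybar 0 p.1 - C.xiL ybar p.1) ^ 2
  else if h2 : (j : ℕ) = n + 1 then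
    (((-(C.deltaXiS ybar δybar δx₀ (Fin.last n) p.1)) * (C.ℓ - C.lmax * p.1) +
        C.deltaXiR ybar δybar p.1 * (C.s (Fin.last n) * p.1)) *
        (C.xiR ybar p.1 - C.xiS x₀ ybar (Fin.last n) p.1) -
      ((p.2 - C.xiS x₀ ybar (Fin.last n) p.1) * (C.ℓ - C.lmax * p.1) +
        (C.xiR ybar p.1 - p.2) * (C.s (Fin.last n) * p.1)) *
        (C.deltaXiR ybar δybar p.1 - C.deltaXiS ybar δybar δx₀ (Fin.last n) p.1))
      / (C.xiR ybar p.1 - C.xiS x₀ ybar (Fin.last n) p.1) ^ 2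
  else if p.1 = 0 then 0
  else
    (((-(C.deltaXiS ybar δybar δx₀ ⟨(j : ℕ) - 1, by have := j.isLt; omega⟩ p.1)) *
        (C.s ⟨(j : ℕ), by have := j.isLt; omega⟩ * p.1) +
        C.deltaXiS ybar δybar δx₀ ⟨(j : ℕ), by have := j.isLt; omega⟩ p.1 *
          (C.s ⟨(j : ℕ) - 1, by have := j.isLt; omega⟩ * p.1)) *
        (C.xiS x₀ ybar ⟨(j : ℕ), by have := j.isLt; omega⟩ p.1 -
          C.xiS x₀ ybar ⟨(j : ℕ) - 1, by have := j.isLt; omega⟩ p.1) -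
      ((p.2 - C.xiS x₀ ybar ⟨(j : ℕ) - 1, by have := j.isLt; omega⟩ p.1) *
          (C.s ⟨(j : ℕ), by have := j.isLt; omega⟩ * p.1) +
        (C.xiS x₀ ybar ⟨(j : ℕ), by have := j.isLt; omega⟩ p.1 - p.2) *
          (C.s ⟨(j : ℕ) - 1, by have := j.isLt; omega⟩ * p.1)) *
        (C.deltaXiS ybar δybar δx₀ ⟨(j : ℕ), by have := j.isLt; omega⟩ p.1 -
          C.deltaXiS ybar δybar δx₀ ⟨(j : ℕ) - 1, by have := j.isLt; omega⟩ p.1))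
      / (C.xiS x₀ ybar ⟨(j : ℕ), by have := j.isLt; omega⟩ p.1 -
          C.xiS x₀ ybar ⟨(j : ℕ) - 1, by have := j.isLt; omega⟩ p.1) ^ 2

/-- Directional derivative of `Ā^{(ȳ,x₀),j}`, applied to `v`. -/
def sensAbar (x₀ : ℝ) (ybar δybar : Comp n) (δx₀ : ℝ) (j : Fin (n + 2)) (p : ℝ × ℝ)
    (v : Rd n) : Rd n :=
  (fderivWithin ℝ (C.xTrafo x₀ ybar j) (C.sector j) p (0, 1))⁻¹ •
      (fderiv ℝ (fun y => fderiv ℝ C.f y v) (ybar j p) (δybar j p) -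
        fderivWithin ℝ (C.deltaXTrafo ybar δybar δx₀ j) (C.sector j) p (1, 0) • v) -
    (fderivWithin ℝ (C.deltaXTrafo ybar δybar δx₀ j) (C.sector j) p (0, 1) /
        (fderivWithin ℝ (C.xTrafo x₀ ybar j) (C.sector j) p (0, 1)) ^ 2) •
      (fderiv ℝ C.f (ybar j p) v -
        fderivWithin ℝ (C.xTrafo x₀ ybar j) (C.sector j) p (1, 0) • v)

/-- The source term of the linearized (sensitivity) system:
`d_{(ȳ,x₀)}ḡ^{(ȳ,x₀)}·(δȳ,δx₀) - (d_{(ȳ,x₀)}Ā^{(ȳ,x₀)}·(δȳ,δx₀)) ȳ_x̄`. -/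
def sensSource (x₀ : ℝ) (ybar : Comp n) (δybar : Comp n) (δx₀ : ℝ) (j : Fin (n + 2))
    (p : ℝ × ℝ) : Rd n :=
  fderiv ℝ (fun q : ℝ × Rd n => C.g p.1 q.1 q.2) (C.xTrafo x₀ ybar j p, ybar j p)
      (C.deltaXTrafo ybar δybar δx₀ j p, δybar j p) -
    C.sensAbar x₀ ybar δybar δx₀ j p (fderivWithin ℝ (ybar j) (C.sector j) p (0, 1))

/-- The linearized Rankine–Hugoniot boundary operator `B_i^j` (fast fields). -/
def Bfast (ybar : Comp n) (k : Fin (n + 1)) (i : Fin (n + 1)) (t : ℝ) (v : ℝ)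
    (v1 v2 : Rd n) : ℝ :=
  fderiv ℝ (fun q : ℝ × Rd n × Rd n => C.Gfast i q.1 q.2.1 q.2.2)
      (⟪C.lvec (ybar k.castSucc (t, C.s k * t)) i, ybar k.castSucc (t, C.s k * t)⟫,
        ybar k.castSucc (t, C.s k * t), ybar k.succ (t, C.s k * t))
      (v, v1, v2) -
    ⟪fderiv ℝ (fun y => C.lvec y i) (ybar k.succ (t, C.s k * t)) v2,
      ybar k.succ (t, C.s k * t)⟫

/-- The linearized Rankine–Hugoniot boundary operator `B_i^j` (slow fields). -/
def Bslow (ybar : Comp n) (k : Fin (n + 1)) (i : Fin (n + 1)) (t : ℝ) (v : ℝ)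
    (v1 v2 : Rd n) : ℝ :=
  fderiv ℝ (fun q : ℝ × Rd n × Rd n => C.Gslow i q.1 q.2.1 q.2.2)
      (⟪C.lvec (ybar k.succ (t, C.s k * t)) i, ybar k.succ (t, C.s k * t)⟫,
        ybar k.castSucc (t, C.s k * t), ybar k.succ (t, C.s k * t))
      (v, v1, v2) -
    ⟪fderiv ℝ (fun y => C.lvec y i) (ybar k.castSucc (t, C.s k * t)) v1,
      ybar k.castSucc (t, C.s k * t)⟫

/-- The combined linearized interior boundary conditions for the sensitivity system. -/
def Bcond (ybar : Comp n) : Fin (n + 1) → Fin (n + 1) → ℝ → ℝ → Rd n → Rd n → ℝ :=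
  fun i k t v v1 v2 =>
    if (k : ℕ) < (i : ℕ) then C.Bfast ybar k i t v v1 v2 else C.Bslow ybar k i t v v1 v2

/-- The initial datum of the sensitivity system on `[-ℓ,0]` (`ul'` is the derivative
of the left control). -/
def sensInitL (x₀ : ℝ) (δul ul' : ℝ → Rd n) (δx₀ : ℝ) (x : ℝ) : Rd n :=
  C.dilL x₀ δul x + ((x + C.ℓ) / C.ℓ * δx₀) • C.dilL x₀ ul' x

/-- The initial datum of the sensitivity system on `[0,ℓ]`. -/
def sensInitR (x₀ : ℝ) (δur ur' : ℝ → Rd n) (δx₀ : ℝ) (x : ℝ) : Rd n :=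
  C.dilR x₀ δur x + ((x - C.ℓ) / C.ℓ * δx₀) • C.dilR x₀ ur' x

/-- `δȳ` is the broad solution of the linearized (sensitivity) system at the
reference solution `ȳ` with control perturbation `(δu_l, δu_r, δx₀)`. -/
def IsSensSol (x₀ : ℝ) (ybar : Comp n) (δul δur ul' ur' : ℝ → Rd n) (δx₀ : ℝ)
    (δybar : Comp n) : Prop :=
  C.IsBroadSol ybar (fun j p i => C.lamBarQ x₀ ybar j p i)
    (fun δy j p => C.sensSource x₀ ybar δy δx₀ j p) (C.Bcond ybar)
    (C.sensInitL x₀ δul ul' δx₀) (C.sensInitR x₀ δur ur' δx₀) δybar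

/-- The Banach space modelling `PC⁰(D̄)`: bounded continuous functions on each sector. -/
abbrev PCSpace (C : Ctx n) : Type := (j : Fin (n + 2)) → (C.sector j →ᵇ Rd n)

/-- Unbundle an element of `PCSpace` into piecewise data. -/
def toComp (Y : PCSpace C) : Comp n :=
  fun j p => if h : p ∈ C.sector j then Y j ⟨p, h⟩ else 0

/-- The Banach space modelling the control space
`U = C¹([-ℓ,ε];ℝⁿ) × C¹([-ε,ℓ];ℝⁿ) × ℝ`: a `C¹` function is modelled by the
pair (function, derivative) of bounded continuous functions. -/
abbrev CtrlSpace (n : ℕ) : Type :=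
  ((ℝ →ᵇ Rd n) × (ℝ →ᵇ Rd n)) × ((ℝ →ᵇ Rd n) × (ℝ →ᵇ Rd n)) × ℝ

/-- The admissible set `U_ad` inside the control space model: the second entries
are the derivatives of the first on the relevant intervals, and the `C⁰`/`C¹`
bounds defining `V_ad` hold. -/
def UadSet (uL uR : Rd n) (M₀ M₁ ε : ℝ) : Set (CtrlSpace n) :=
  {u | (∀ x ∈ Icc (-C.ℓ) ε,
          HasDerivWithinAt (fun y => u.1.1 y) (u.1.2 x) (Icc (-C.ℓ) ε) x) ∧
       (∀ x ∈ Icc (-ε) C.ℓ,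
          HasDerivWithinAt (fun y => u.2.1.1 y) (u.2.1.2 x) (Icc (-ε) C.ℓ) x) ∧
       (∀ x ∈ Icc (-C.ℓ) ε, ‖u.1.1 x - uL‖ < M₀ ∧ ‖u.1.2 x‖ < M₁) ∧
       (∀ x ∈ Icc (-ε) C.ℓ, ‖u.2.1.1 x - uR‖ < M₀ ∧ ‖u.2.1.2 x‖ < M₁) ∧
       u.2.2 ∈ Ioo (-ε) ε}

/-- The physical solution recovered from a reference-space solution. -/
def physSol (x₀ : ℝ) (ybar : Comp n) (p : ℝ × ℝ) : Rd n :=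
  if h : ∃ j, p ∈ C.physSector x₀ ybar j then
    ybar h.choose (p.1, C.xbarTrafo x₀ ybar h.choose p)
  else 0

/-- The transported sensitivity `δy = T(u)·δu` in physical coordinates. -/
def deltaYPhys (x₀ : ℝ) (ybar δybar : Comp n) (δx₀ : ℝ) (p : ℝ × ℝ) : Rd n :=
  if h : ∃ j, p ∈ C.physSector x₀ ybar j then
    δybar h.choose (p.1, C.xbarTrafo x₀ ybar h.choose p) +
      C.deltaXbarTrafo x₀ ybar δybar δx₀ h.choose p •
        fderivWithin ℝ (ybar h.choose) (C.sector h.choose)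
          (p.1, C.xbarTrafo x₀ ybar h.choose p) (0, 1)
  else 0

/-- `∂_x̄ Ā^{(z̄,x₀),j}` applied to `v` (note `x_x̄^{(z̄,x₀),j}` is independent of `x̄`). -/
def dxAbar (x₀ : ℝ) (zbar : Comp n) (j : Fin (n + 2)) (p : ℝ × ℝ) (v : Rd n) : Rd n :=
  (fderivWithin ℝ (C.xTrafo x₀ zbar j) (C.sector j) p (0, 1))⁻¹ •
    (fderiv ℝ (fun y => fderiv ℝ C.f y v) (zbar j p)
        (fderivWithin ℝ (zbar j) (C.sector j) p (0, 1)) -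
      fderivWithin ℝ
        (fun q => fderivWithin ℝ (C.xTrafo x₀ zbar j) (C.sector j) q (1, 0))
        (C.sector j) p (0, 1) • v)

end Ctx

def GoodT (S : Set (ℝ × ℝ)) (X : ℝ × ℝ → ℝ) (Q : ℝ → ℝ) : Prop :=
  ∃ c : ℝ × ℝ → ℝ, ContinuousOn c S ∧ ∀ p ∈ S,
    HasFDerivWithinAt X (Q p.1 • ContinuousLinearMap.snd ℝ ℝ ℝ +
      c p • ContinuousLinearMap.fst ℝ ℝ ℝ) S p

theorem GoodT.contDiffOn {S : Set (ℝ × ℝ)} {X : ℝ × ℝ → ℝ} {Q : ℝ → ℝ}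
    (h : GoodT S X Q) (hQ : ContinuousOn (fun p : ℝ × ℝ => Q p.1) S) :
    ContDiffOn ℝ 1 X S := by
  obtain ⟨c, hc, hd⟩ := h
  have h01 : (1 : WithTop ℕ∞) = 0 + 1 := by simp
  rw [h01, contDiffOn_succ_iff_hasFDerivWithinAt (by simp)]
  intro x hx
  refine ⟨S, ?_, by simp, _, fun p hp => hd p hp, ?_⟩
  · rw [insert_eq_of_mem hx]; exact self_mem_nhdsWithin
  · rw [contDiffOn_zero]
    exact (hQ.smul continuousOn_const).add (hc.smul continuousOn_const)

theorem GoodT.congr {S : Set (ℝ × ℝ)} {X Y : ℝ × ℝ → ℝ} {Q R : ℝ → ℝ}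
    (h : GoodT S X Q) (hXY : ∀ p ∈ S, Y p = X p) (hQR : ∀ p ∈ S, R p.1 = Q p.1) :
    GoodT S Y R := by
  obtain ⟨c, hc, hd⟩ := h
  refine ⟨c, hc, fun p hp => ?_⟩
  rw [hQR p hp]
  exact (hd p hp).congr hXY (hXY p hp)

theorem goodT_affine {S : Set (ℝ × ℝ)} {T : ℝ} (hT : 0 < T) {Q P : ℝ → ℝ}
    (hQ : ContDiffOn ℝ 1 Q (Icc 0 T)) (hP : ContDiffOn ℝ 1 P (Icc 0 T))
    (hS : ∀ p ∈ S, p.1 ∈ Icc (0:ℝ) T) :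
    GoodT S (fun p => Q p.1 * p.2 + P p.1) Q := by
  have hu := uniqueDiffOn_Icc hT
  have hm : MapsTo (fun p : ℝ × ℝ => p.1) S (Icc 0 T) := hS
  have hQ' := (hQ.continuousOn_derivWithin hu le_rfl).comp continuousOn_fst hm
  have hP' := (hP.continuousOn_derivWithin hu le_rfl).comp continuousOn_fst hm
  refine ⟨fun p => p.2 * derivWithin Q (Icc 0 T) p.1 + derivWithin P (Icc 0 T) p.1,
    (continuousOn_snd.mul hQ').add hP', fun p hp => ?_⟩
  have h1 : HasFDerivWithinAt (fun p : ℝ × ℝ => p.1) (ContinuousLinearMap.fst ℝ ℝ ℝ) S p :=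
    hasFDerivWithinAt_fst
  have h2 : HasFDerivWithinAt (fun p : ℝ × ℝ => p.2) (ContinuousLinearMap.snd ℝ ℝ ℝ) S p :=
    hasFDerivWithinAt_snd
  have dQ := ((hQ.differentiableOn (by simp) p.1 (hS p hp)).hasDerivWithinAt).comp_hasFDerivWithinAt
    p h1 hm
  have dP := ((hP.differentiableOn (by simp) p.1 (hS p hp)).hasDerivWithinAt).comp_hasFDerivWithinAt
    p h1 hm
  refine HasFDerivWithinAt.congr_fderiv (f := fun p : ℝ × ℝ => Q p.1 * p.2 + P p.1)
    ((dQ.mul h2).add dP) ?_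
  ext <;> simp

def NiceT (h : ℝ → ℝ) : Prop :=
  Continuous h ∧ ∃ k : ℝ → ℝ, Continuous k ∧ k 0 = 0 ∧ ∀ t > 0, HasDerivAt h (k t / t) t

theorem NiceT.inv {h : ℝ → ℝ} (hh : NiceT h) (h0 : ∀ t, 0 < h t) : NiceT (fun t => (h t)⁻¹) := by
  obtain ⟨hc, k, hk, hk0, hd⟩ := hh
  refine ⟨hc.inv₀ (fun t => (h0 t).ne'), fun t => - k t / (h t)^2, ?_, by simp [hk0], ?_⟩
  · exact hk.neg.div (hc.pow 2) (fun t => by have := h0 t; positivity)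
  · intro t ht
    refine ((hd t ht).inv (h0 t).ne').congr_deriv ?_
    field_simp

theorem NiceT.comb {h g : ℝ → ℝ} (hh : NiceT h) (hg : NiceT g) (r : ℝ) :
    NiceT (fun t => (h t - g t) / r) := by
  obtain ⟨hc, k, hk, hk0, hd⟩ := hh
  obtain ⟨hc', k', hk', hk0', hd'⟩ := hg
  refine ⟨(hc.sub hc').div_const r, fun t => (k t - k' t) / r, (hk.sub hk').div_const r,
    by simp [hk0, hk0'], fun t ht => ?_⟩
  refine (((hd t ht).sub (hd' t ht)).div_const r).congr_deriv ?_
  ring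

def avgT (Λ : ℝ → ℝ) (t : ℝ) : ℝ := ∫ u in (0:ℝ)..1, Λ (u * t)

theorem mul_avgT (Λ : ℝ → ℝ) (t : ℝ) : t * avgT Λ t = ∫ τ in (0:ℝ)..t, Λ τ := by
  simp [avgT]

theorem niceT_avg {Λ : ℝ → ℝ} (hΛ : Continuous Λ) : NiceT (avgT Λ) := by
  have hc : Continuous (avgT Λ) := by
    unfold avgT
    apply intervalIntegral.continuous_parametric_intervalIntegral_of_continuous'
    fun_prop
  refine ⟨hc, fun t => Λ t - avgT Λ t, hΛ.sub hc, by simp [avgT], fun t ht => ?_⟩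
  have h1 : HasDerivAt (fun t => ∫ τ in (0:ℝ)..t, Λ τ) (Λ t) t :=
    hΛ.integral_hasStrictDerivAt 0 t |>.hasDerivAt
  have h2 := h1.div (hasDerivAt_id t) ht.ne'
  have h3 : avgT Λ =ᶠ[nhds t] (fun t => ∫ τ in (0:ℝ)..t, Λ τ) / id := by
    filter_upwards [lt_mem_nhds ht] with s hs
    have : (s:ℝ) ≠ 0 := hs.ne'
    simp only [Pi.div_apply, id]
    rw [← mul_avgT]; field_simp
  refine (h2.congr_of_eventuallyEq h3).congr_deriv ?_
  rw [← mul_avgT]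
  simp only [id]
  field_simp

theorem contDiff_integralT {Λ : ℝ → ℝ} (hΛ : Continuous Λ) :
    ContDiff ℝ 1 (fun t => ∫ τ in (0:ℝ)..t, Λ τ) := by
  have h1 : ∀ t, HasDerivAt (fun t => ∫ τ in (0:ℝ)..t, Λ τ) (Λ t) t := fun t =>
    hΛ.integral_hasStrictDerivAt 0 t |>.hasDerivAt
  rw [contDiff_one_iff_deriv]
  refine ⟨fun t => (h1 t).differentiableAt, ?_⟩
  have : deriv (fun t => ∫ τ in (0:ℝ)..t, Λ τ) = Λ := funext fun t => (h1 t).deriv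
  rw [this]; exact hΛ

theorem avgT_lt {Λ Λ' : ℝ → ℝ} (h : Continuous Λ) (h' : Continuous Λ') (hlt : ∀ t, Λ t < Λ' t)
    (t : ℝ) : avgT Λ t < avgT Λ' t := by
  unfold avgT
  have c1 : Continuous (fun u => Λ (u * t)) := by fun_prop
  have c2 : Continuous (fun u => Λ' (u * t)) := by fun_prop
  rw [← sub_pos, ← intervalIntegral.integral_sub (c2.intervalIntegrable _ _)
    (c1.intervalIntegrable _ _)]
  apply intervalIntegral.intervalIntegral_pos_of_pos
  · exact (c2.sub c1).intervalIntegrable _ _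
  · intro x; exact sub_pos.2 (hlt _)
  · norm_num

theorem goodT_nice {S : Set (ℝ × ℝ)} {h P1 P2 M : ℝ → ℝ} (hh : NiceT h)
    (hP1 : ContDiff ℝ 1 P1) (hP2 : ContDiff ℝ 1 P2) (hM : Continuous M)
    (hS0 : ∀ p ∈ S, 0 ≤ p.1)
    (hSM : ∀ p ∈ S, |p.2 - P1 p.1| ≤ M p.1 * p.1) :
    GoodT S (fun p => h p.1 * (p.2 - P1 p.1) + P2 p.1) h := by
  obtain ⟨hc, k, hk, hk0, hd⟩ := hh
  have dP1 : Continuous (deriv P1) := hP1.continuous_deriv le_rfl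
  have dP2 : Continuous (deriv P2) := hP2.continuous_deriv le_rfl
  have cP1 : Continuous P1 := hP1.continuous
  refine ⟨fun p => - h p.1 * deriv P1 p.1 + deriv P2 p.1 + (p.2 - P1 p.1) / p.1 * k p.1, ?_, ?_⟩
  · refine ContinuousOn.add (Continuous.continuousOn (by fun_prop)) ?_
    intro p hp
    by_cases hp0 : p.1 = 0
    · have e : (fun p : ℝ × ℝ => (p.2 - P1 p.1) / p.1 * k p.1) p = 0 := by simp [hp0]
      unfold ContinuousWithinAt
      rw [e]
      have hlim : Filter.Tendsto (fun q : ℝ × ℝ => |M q.1| * |k q.1|) (nhdsWithin p S) (nhds 0) := by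
        have : Continuous (fun q : ℝ × ℝ => |M q.1| * |k q.1|) := by fun_prop
        have := (this.tendsto p).mono_left (nhdsWithin_le_nhds (s := S))
        simpa [hp0, hk0] using this
      refine squeeze_zero_norm' ?_ hlim
      filter_upwards [self_mem_nhdsWithin] with q hq
      rw [norm_mul, Real.norm_eq_abs, Real.norm_eq_abs]
      apply mul_le_mul_of_nonneg_right _ (abs_nonneg _)
      rcases (hS0 q hq).eq_or_lt with h0 | h0
      · rw [← h0]; simp
      · rw [abs_div, abs_of_pos h0, div_le_iff₀ h0]
        exact (hSM q hq).trans (mul_le_mul_of_nonneg_right (le_abs_self _) h0.le)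
    · apply ContinuousAt.continuousWithinAt
      have : ContinuousAt (fun p : ℝ × ℝ => p.2 - P1 p.1) p := by fun_prop
      exact (this.div continuousAt_fst hp0).mul (by fun_prop)
  · intro p hp
    have h1 : HasFDerivWithinAt (fun p : ℝ × ℝ => p.1) (ContinuousLinearMap.fst ℝ ℝ ℝ) S p :=
      hasFDerivWithinAt_fst
    have h2 : HasFDerivWithinAt (fun p : ℝ × ℝ => p.2) (ContinuousLinearMap.snd ℝ ℝ ℝ) S p :=
      hasFDerivWithinAt_snd
    have e1 := ((hP1.differentiable (by simp)) p.1).hasDerivAt.comp_hasFDerivWithinAt p h1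
    have e2 := ((hP2.differentiable (by simp)) p.1).hasDerivAt.comp_hasFDerivWithinAt p h1
    have eL := h2.sub e1
    by_cases hp0 : p.1 = 0
    · have hL0 : p.2 - P1 p.1 = 0 := by
        have := hSM p hp
        rw [hp0, mul_zero] at this
        rw [hp0]
        exact abs_eq_zero.1 (le_antisymm this (abs_nonneg _))
      have hO : (fun q : ℝ × ℝ => (h q.1 - h p.1) * (q.2 - P1 q.1)) =o[nhdsWithin p S]
          (fun q => q - p) := by
        have t1 : (fun q : ℝ × ℝ => h q.1 - h p.1) =o[nhdsWithin p S] (fun _ => (1:ℝ)) := by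
          rw [Asymptotics.isLittleO_one_iff]
          have : Continuous (fun q : ℝ × ℝ => h q.1 - h p.1) := by fun_prop
          have := (this.tendsto p).mono_left (nhdsWithin_le_nhds (s := S))
          simpa using this
        have t2 : (fun q : ℝ × ℝ => (q.2 - P1 q.1)) =O[nhdsWithin p S] (fun q => ‖q - p‖) := by
          have := eL.isBigO_sub.norm_right
          refine this.congr_left ?_
          intro q
          simp [hL0]
        have := (t1.mul_isBigO t2)
        simpa using this.norm_right
      have h3 : HasFDerivWithinAt (fun q : ℝ × ℝ => (h q.1 - h p.1) * (q.2 - P1 q.1))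
          (0 : ℝ × ℝ →L[ℝ] ℝ) S p := by
        rw [hasFDerivWithinAt_iff_isLittleO]
        refine hO.congr_left ?_
        intro q; simp
      have h4 := (h3.add (eL.const_mul (h p.1))).add e2
      have h5 : HasFDerivWithinAt (fun p => h p.1 * (p.2 - P1 p.1) + P2 p.1) _ S p :=
        h4.congr (fun q _ => by simp; ring) (by simp)
      refine h5.congr_fderiv ?_
      ext <;> simp [hp0]
    · have hpos : 0 < p.1 := lt_of_le_of_ne (hS0 p hp) (Ne.symm hp0)
      have e3 := (hd p.1 hpos).comp_hasFDerivWithinAt p h1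
      refine HasFDerivWithinAt.congr_fderiv
        (f := fun p : ℝ × ℝ => h p.1 * (p.2 - P1 p.1) + P2 p.1) ((e3.mul eL).add e2) ?_
      ext
      · simp
        field_simp
        ring
      · simp

theorem abs_main {E : Type*} [NormedAddCommGroup E] [NormedSpace ℝ E]
    {S S' : Set (ℝ × ℝ)} {X Xb : ℝ × ℝ → ℝ} {Q : ℝ → ℝ}
    (hQ : ∀ p ∈ S, 0 < Q p.1)
    (hQc : ContinuousOn (fun p : ℝ × ℝ => Q p.1) S)
    (hQc' : ContinuousOn (fun p : ℝ × ℝ => (Q p.1)⁻¹) S')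
    (hG : GoodT S X Q) (hG' : GoodT S' Xb (fun t => (Q t)⁻¹))
    (hu : UniqueDiffOn ℝ S)
    (hΦ : ∀ p ∈ S, (p.1, X p) ∈ S') (hΨ : ∀ p ∈ S', (p.1, Xb p) ∈ S)
    (h1 : ∀ p ∈ S, Xb (p.1, X p) = p.2) (h2 : ∀ p ∈ S', X (p.1, Xb p) = p.2)
    (A : ℝ × ℝ → E →L[ℝ] E) (G : ℝ → ℝ → E → E) :
    (∀ yb : ℝ × ℝ → E, ContDiffOn ℝ 1 yb S →
      (∀ p ∈ S, fderivWithin ℝ yb S p (1, 0) +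
        (fderivWithin ℝ X S p (0, 1))⁻¹ • (A p (fderivWithin ℝ yb S p (0, 1)) -
          fderivWithin ℝ X S p (1, 0) • fderivWithin ℝ yb S p (0, 1)) = G p.1 (X p) (yb p)) →
      (ContDiffOn ℝ 1 (fun p : ℝ × ℝ => yb (p.1, Xb p)) S' ∧ ∀ p ∈ S',
        fderivWithin ℝ (fun p : ℝ × ℝ => yb (p.1, Xb p)) S' p (1, 0) +
          A (p.1, Xb p) (fderivWithin ℝ (fun p : ℝ × ℝ => yb (p.1, Xb p)) S' p (0, 1)) =
          G p.1 p.2 (yb (p.1, Xb p)))) ∧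
    (∀ y : ℝ × ℝ → E, ContDiffOn ℝ 1 y S' →
      (∀ p ∈ S', fderivWithin ℝ y S' p (1, 0) +
          A (p.1, Xb p) (fderivWithin ℝ y S' p (0, 1)) = G p.1 p.2 (y p)) →
      (ContDiffOn ℝ 1 (fun p : ℝ × ℝ => y (p.1, X p)) S ∧ ∀ p ∈ S,
        fderivWithin ℝ (fun p : ℝ × ℝ => y (p.1, X p)) S p (1, 0) +
        (fderivWithin ℝ X S p (0, 1))⁻¹ •
          (A p (fderivWithin ℝ (fun p : ℝ × ℝ => y (p.1, X p)) S p (0, 1)) -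
          fderivWithin ℝ X S p (1, 0) •
            fderivWithin ℝ (fun p : ℝ × ℝ => y (p.1, X p)) S p (0, 1)) =
          G p.1 (X p) (y (p.1, X p)))) ∧
    (∀ p ∈ S, 0 < fderivWithin ℝ X S p (0, 1)) := by
  have cX := hG.contDiffOn hQc
  have cXb := hG'.contDiffOn hQc'
  have cΦ : ContDiffOn ℝ 1 (fun p : ℝ × ℝ => (p.1, X p)) S := contDiffOn_fst.prodMk cX
  have cΨ : ContDiffOn ℝ 1 (fun p : ℝ × ℝ => (p.1, Xb p)) S' := contDiffOn_fst.prodMk cXb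
  obtain ⟨c, -, hd⟩ := hG
  obtain ⟨d, -, hd'⟩ := hG'
  have dX : ∀ p ∈ S, fderivWithin ℝ X S p = Q p.1 • ContinuousLinearMap.snd ℝ ℝ ℝ +
      c p • ContinuousLinearMap.fst ℝ ℝ ℝ := fun p hp => (hd p hp).fderivWithin (hu p hp)
  have dX0 : ∀ p ∈ S, fderivWithin ℝ X S p (0, 1) = Q p.1 := fun p hp => by
    rw [dX p hp]; simp
  have dX1 : ∀ p ∈ S, fderivWithin ℝ X S p (1, 0) = c p := fun p hp => by
    rw [dX p hp]; simp
  have DΦ : ∀ p ∈ S, HasFDerivWithinAt (fun p : ℝ × ℝ => (p.1, X p))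
      ((ContinuousLinearMap.fst ℝ ℝ ℝ).prod (Q p.1 • ContinuousLinearMap.snd ℝ ℝ ℝ +
      c p • ContinuousLinearMap.fst ℝ ℝ ℝ)) S p := fun p hp =>
    hasFDerivWithinAt_fst.prodMk (hd p hp)
  have DΨ : ∀ p ∈ S', HasFDerivWithinAt (fun p : ℝ × ℝ => (p.1, Xb p))
      ((ContinuousLinearMap.fst ℝ ℝ ℝ).prod ((Q p.1)⁻¹ • ContinuousLinearMap.snd ℝ ℝ ℝ +
      d p • ContinuousLinearMap.fst ℝ ℝ ℝ)) S' p := fun p hp =>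
    hasFDerivWithinAt_fst.prodMk (hd' p hp)
  have himg : (fun p : ℝ × ℝ => (p.1, X p)) '' S = S' := by
    ext q; constructor
    · rintro ⟨p, hp, rfl⟩; exact hΦ p hp
    · intro hq
      exact ⟨_, hΨ q hq, by simp [h2 q hq]⟩
  have hu' : UniqueDiffOn ℝ S' := by
    rw [← himg]
    rintro _ ⟨p, hp, rfl⟩
    refine (DΦ p hp).uniqueDiffWithinAt (hu p hp) (Function.Surjective.denseRange ?_)
    rintro ⟨a, b⟩
    have := (hQ p hp).ne'
    refine ⟨(a, (b - c p * a) / Q p.1), ?_⟩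
    ext
    · simp
    · simp; field_simp; ring
  -- relation between `c` and `d`
  have hcd : ∀ p ∈ S, d (p.1, X p) + (Q p.1)⁻¹ * c p = 0 := by
    intro p hp
    have hcomp := (hd' _ (hΦ p hp)).comp p (DΦ p hp) (fun q hq => hΦ q hq)
    have hid : HasFDerivWithinAt (Xb ∘ fun p : ℝ × ℝ => (p.1, X p))
        (ContinuousLinearMap.snd ℝ ℝ ℝ) S p :=
      hasFDerivWithinAt_snd.congr (fun q hq => h1 q hq) (h1 p hp)
    have := (hu p hp).eq hcomp hid
    have := congrArg (fun L : ℝ × ℝ →L[ℝ] ℝ => L (1, 0)) this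
    simp at this
    linarith
  refine ⟨?_, ?_, ?_⟩
  · intro yb hyb hpde
    refine ⟨hyb.comp cΨ hΨ, fun p hp => ?_⟩
    have hq := hΨ p hp
    have D := (hyb.differentiableOn (by simp) _ hq).hasFDerivWithinAt.comp p (DΨ p hp) hΨ
    have D' := D.fderivWithin (hu' p hp)
    have e := hpde _ hq
    rw [dX0 _ hq, dX1 _ hq, h2 p hp] at e
    have hr := hcd _ hq
    simp only [h2 p hp, Prod.mk.eta] at hr
    change fderivWithin ℝ (yb ∘ fun p : ℝ × ℝ => (p.1, Xb p)) S' p (1, 0) + A (p.1, Xb p)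
      (fderivWithin ℝ (yb ∘ fun p : ℝ × ℝ => (p.1, Xb p)) S' p (0, 1)) = _
    rw [D']
    rw [← e]
    set B := fderivWithin ℝ yb S (p.1, Xb p)
    have v1 : (((1:ℝ), d p) : ℝ × ℝ) = (1, 0) + d p • (0, 1) := by simp
    have v2 : (((0:ℝ), (Q p.1)⁻¹) : ℝ × ℝ) = (Q p.1)⁻¹ • (0, 1) := by simp
    have hdd : d p = -((Q p.1)⁻¹ * c (p.1, Xb p)) := by linarith
    simp only [ContinuousLinearMap.comp_apply, ContinuousLinearMap.prod_apply,
      add_apply, smul_apply, ContinuousLinearMap.coe_fst',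
      ContinuousLinearMap.coe_snd', smul_eq_mul, mul_zero, mul_one, zero_add, add_zero]
    rw [v1, v2, map_add, map_smul, map_smul, map_smul, hdd]
    module
  · intro y hy hpde
    refine ⟨hy.comp cΦ hΦ, fun p hp => ?_⟩
    have hq := hΦ p hp
    have D := (hy.differentiableOn (by simp) _ hq).hasFDerivWithinAt.comp p (DΦ p hp) hΦ
    have D' := D.fderivWithin (hu p hp)
    have e := hpde _ hq
    simp only [h1 p hp, Prod.mk.eta] at e
    rw [dX0 _ hp, dX1 _ hp]
    change fderivWithin ℝ (y ∘ fun p : ℝ × ℝ => (p.1, X p)) S p (1, 0) + (Q p.1)⁻¹ • (A p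
      (fderivWithin ℝ (y ∘ fun p : ℝ × ℝ => (p.1, X p)) S p (0, 1)) - c p •
      (fderivWithin ℝ (y ∘ fun p : ℝ × ℝ => (p.1, X p)) S p (0, 1))) = _
    rw [D', ← e]
    set B := fderivWithin ℝ y S' (p.1, X p)
    have v1 : (((1:ℝ), c p) : ℝ × ℝ) = (1, 0) + c p • (0, 1) := by simp
    have v2 : (((0:ℝ), Q p.1) : ℝ × ℝ) = Q p.1 • (0, 1) := by simp
    simp only [ContinuousLinearMap.comp_apply, ContinuousLinearMap.prod_apply,
      add_apply, smul_apply, ContinuousLinearMap.coe_fst',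
      ContinuousLinearMap.coe_snd', smul_eq_mul, mul_zero, mul_one, zero_add, add_zero]
    have hne := (hQ p hp).ne'
    rw [v1, v2, map_add, map_smul, map_smul, map_smul, smul_sub, smul_smul, smul_smul, smul_smul,
      inv_mul_cancel₀ hne]
    have : (Q p.1)⁻¹ * c p * Q p.1 = c p := by field_simp
    rw [this]
    module
  · intro p hp
    rw [dX0 p hp]; exact hQ p hp

def SetupT (T : ℝ) (S S' : Set (ℝ × ℝ)) (X Xb : ℝ × ℝ → ℝ) : Prop :=
  ∃ Q : ℝ → ℝ, (∀ t ∈ Icc 0 T, 0 < Q t) ∧ ContinuousOn Q (Icc 0 T) ∧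
    (∀ p ∈ S, p.1 ∈ Icc 0 T) ∧ (∀ p ∈ S', p.1 ∈ Icc 0 T) ∧
    GoodT S X Q ∧ GoodT S' Xb (fun t => (Q t)⁻¹) ∧ UniqueDiffOn ℝ S ∧
    (∀ p ∈ S, (p.1, X p) ∈ S') ∧ (∀ p ∈ S', (p.1, Xb p) ∈ S) ∧
    (∀ p ∈ S, Xb (p.1, X p) = p.2) ∧ (∀ p ∈ S', X (p.1, Xb p) = p.2)

theorem uniqueDiffOn_sectorT {T α a β b : ℝ} (hT : 0 < T) {S : Set (ℝ × ℝ)}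
    (hS : ∀ p, p ∈ S ↔ p.1 ∈ Icc 0 T ∧ α + a * p.1 ≤ p.2 ∧ p.2 ≤ β + b * p.1)
    (hlt : α + a * (T / 2) < β + b * (T / 2)) : UniqueDiffOn ℝ S := by
  have hconv : Convex ℝ S := by
    intro p hp q hq u v hu hv huv
    rw [hS] at hp hq ⊢
    obtain ⟨⟨p0, p1⟩, p2, p3⟩ := hp
    obtain ⟨⟨q0, q1⟩, q2, q3⟩ := hq
    simp only [Prod.fst_add, Prod.smul_fst, Prod.snd_add, Prod.smul_snd, smul_eq_mul, mem_Icc]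
    obtain rfl : v = 1 - u := by linarith
    refine ⟨⟨by positivity, ?_⟩, ?_, ?_⟩ <;> nlinarith
  apply uniqueDiffOn_convex hconv
  let U : Set (ℝ × ℝ) := {p | 0 < p.1 ∧ p.1 < T ∧ α + a * p.1 < p.2 ∧ p.2 < β + b * p.1}
  have hU : IsOpen U := by
    have h1 : IsOpen {p : ℝ × ℝ | 0 < p.1} := isOpen_lt (by fun_prop) (by fun_prop)
    have h2 : IsOpen {p : ℝ × ℝ | p.1 < T} := isOpen_lt (by fun_prop) (by fun_prop)
    have h3 : IsOpen {p : ℝ × ℝ | α + a * p.1 < p.2} := isOpen_lt (by fun_prop) (by fun_prop)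
    have h4 : IsOpen {p : ℝ × ℝ | p.2 < β + b * p.1} := isOpen_lt (by fun_prop) (by fun_prop)
    exact h1.inter (h2.inter (h3.inter h4))
  have hUS : U ⊆ S := by
    rintro p ⟨h1, h2, h3, h4⟩
    rw [hS]
    exact ⟨⟨h1.le, h2.le⟩, h3.le, h4.le⟩
  refine ⟨(T / 2, (α + a * (T / 2) + (β + b * (T / 2))) / 2), interior_maximal hUS hU ?_⟩
  refine ⟨?_, ?_, ?_, ?_⟩ <;> simp only <;> linarith

theorem setup_common {T : ℝ} {Q P lo hi : ℝ → ℝ} {S S' : Set (ℝ × ℝ)} {X Xb : ℝ × ℝ → ℝ}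
    (hQ : ∀ t ∈ Icc 0 T, 0 < Q t) (hQc : ContinuousOn Q (Icc 0 T))
    (hS : ∀ p, p ∈ S ↔ p.1 ∈ Icc 0 T ∧ lo p.1 ≤ p.2 ∧ p.2 ≤ hi p.1)
    (hS' : ∀ p, p ∈ S' ↔ p.1 ∈ Icc 0 T ∧ Q p.1 * lo p.1 + P p.1 ≤ p.2 ∧
      p.2 ≤ Q p.1 * hi p.1 + P p.1)
    (hX : ∀ p ∈ S, X p = Q p.1 * p.2 + P p.1)
    (hXb : ∀ p ∈ S', Xb p = (Q p.1)⁻¹ * (p.2 - P p.1))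
    (hu : UniqueDiffOn ℝ S)
    (hG : GoodT S (fun p => Q p.1 * p.2 + P p.1) Q)
    (hG' : GoodT S' (fun p => (Q p.1)⁻¹ * (p.2 - P p.1)) (fun t => (Q t)⁻¹)) :
    SetupT T S S' X Xb := by
  have hΦ : ∀ p ∈ S, (p.1, X p) ∈ S' := by
    intro p hp
    rw [hX p hp]
    rw [hS] at hp
    obtain ⟨h0, h1, h2⟩ := hp
    rw [hS']
    have := (hQ _ h0).le
    exact ⟨h0, by dsimp only; gcongr, by dsimp only; gcongr⟩
  have hΨ : ∀ p ∈ S', (p.1, Xb p) ∈ S := by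
    intro p hp
    rw [hXb p hp]
    rw [hS'] at hp
    obtain ⟨h0, h1, h2⟩ := hp
    rw [hS]
    have := (hQ _ h0)
    refine ⟨h0, ?_, ?_⟩
    · dsimp only
      rw [le_inv_mul_iff₀ this]; linarith
    · dsimp only
      rw [inv_mul_le_iff₀ this]; linarith
  refine ⟨Q, hQ, hQc, fun p hp => ((hS p).1 hp).1, fun p hp => ((hS' p).1 hp).1,
    hG.congr hX (fun _ _ => rfl), hG'.congr hXb (fun _ _ => rfl), hu, hΦ, hΨ, ?_, ?_⟩
  · intro p hp
    have := (hQ _ ((hS p).1 hp).1).ne'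
    rw [hXb _ (hΦ p hp), hX p hp]
    field_simp
    ring
  · intro p hp
    have := (hQ _ ((hS' p).1 hp).1).ne'
    rw [hX _ (hΨ p hp), hXb p hp]
    field_simp
    ring

theorem algT1 {L H u v : ℝ} (h : H - L ≠ 0) :
    (v - u) / (H - L) * H + (u - (v - u) / (H - L) * L) = v := by
  field_simp
  ring

theorem algT2 {L H u v x : ℝ} (h : H - L ≠ 0) :
    ((x - L) * v + (H - x) * u) / (H - L) =
      (v - u) / (H - L) * x + (u - (v - u) / (H - L) * L) := by
  field_simp
  ring

theorem algT3 {L H u v x : ℝ} (h : H - L ≠ 0) (h' : v - u ≠ 0) :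
    ((x - u) * H + (v - x) * L) / (v - u) =
      ((v - u) / (H - L))⁻¹ * (x - (u - (v - u) / (H - L) * L)) := by
  field_simp
  ring

theorem setup_outer {T α a β b : ℝ} (hT : 0 < T) {ξa ξb : ℝ → ℝ} {S S' : Set (ℝ × ℝ)}
    {X Xb : ℝ × ℝ → ℝ}
    (hab : ∀ t ∈ Icc 0 T, α + a * t < β + b * t) (hξ : ∀ t ∈ Icc 0 T, ξa t < ξb t)
    (ca : ContDiffOn ℝ 1 ξa (Icc 0 T)) (cb : ContDiffOn ℝ 1 ξb (Icc 0 T))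
    (hS : ∀ p, p ∈ S ↔ p.1 ∈ Icc 0 T ∧ α + a * p.1 ≤ p.2 ∧ p.2 ≤ β + b * p.1)
    (hS' : ∀ p, p ∈ S' ↔ p.1 ∈ Icc 0 T ∧ ξa p.1 ≤ p.2 ∧ p.2 ≤ ξb p.1)
    (hX : ∀ p ∈ S, X p = ((p.2 - (α + a * p.1)) * ξb p.1 + ((β + b * p.1) - p.2) * ξa p.1) /
      ((β + b * p.1) - (α + a * p.1)))
    (hXb : ∀ p ∈ S', Xb p = ((p.2 - ξa p.1) * (β + b * p.1) + (ξb p.1 - p.2) * (α + a * p.1)) /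
      (ξb p.1 - ξa p.1)) :
    SetupT T S S' X Xb := by
  let Q : ℝ → ℝ := fun t => (ξb t - ξa t) / ((β + b * t) - (α + a * t))
  let P : ℝ → ℝ := fun t => ξa t - Q t * (α + a * t)
  have n1 : ∀ t ∈ Icc 0 T, (β + b * t) - (α + a * t) ≠ 0 := fun t ht => (sub_pos.2 (hab t ht)).ne'
  have n2 : ∀ t ∈ Icc 0 T, ξb t - ξa t ≠ 0 := fun t ht => (sub_pos.2 (hξ t ht)).ne'
  have hQ : ∀ t ∈ Icc 0 T, 0 < Q t := fun t ht =>
    div_pos (sub_pos.2 (hξ t ht)) (sub_pos.2 (hab t ht))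
  have cl : ∀ α a : ℝ, ContDiffOn ℝ 1 (fun t : ℝ => α + a * t) (Icc 0 T) := fun α a =>
    ContDiff.contDiffOn (by fun_prop)
  have cQ : ContDiffOn ℝ 1 Q (Icc 0 T) := (cb.sub ca).div ((cl β b).sub (cl α a)) n1
  have cP : ContDiffOn ℝ 1 P (Icc 0 T) := ca.sub (cQ.mul (cl α a))
  have cQi : ContDiffOn ℝ 1 (fun t => (Q t)⁻¹) (Icc 0 T) := cQ.inv (fun t ht => (hQ t ht).ne')
  have cP' : ContDiffOn ℝ 1 (fun t => - ((Q t)⁻¹ * P t)) (Icc 0 T) := (cQi.mul cP).neg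
  have eb : ∀ t ∈ Icc 0 T, Q t * (β + b * t) + P t = ξb t := by
    intro t ht
    simp only [P, Q]
    exact algT1 (n1 t ht)
  refine setup_common (Q := Q) (P := P) (lo := fun t => α + a * t) (hi := fun t => β + b * t) hQ
    cQ.continuousOn hS ?_ ?_ ?_ ?_ ?_ ?_
  · intro p
    rw [hS']
    refine and_congr_right fun ht => ?_
    rw [eb _ ht]
    simp [P]
  · intro p hp
    have ht := ((hS p).1 hp).1
    rw [hX p hp]
    simp only [P, Q]
    exact algT2 (n1 _ ht)
  · intro p hp
    have ht := ((hS' p).1 hp).1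
    rw [hXb p hp]
    simp only [P, Q]
    exact algT3 (n1 _ ht) (n2 _ ht)
  · exact uniqueDiffOn_sectorT hT hS (hab _ ⟨by linarith, by linarith⟩)
  · exact goodT_affine hT cQ cP (fun p hp => ((hS p).1 hp).1)
  · refine (goodT_affine hT cQi cP' (fun p hp => ((hS' p).1 hp).1)).congr ?_ (fun _ _ => rfl)
    intro p hp
    ring

theorem setup_middle {T a b x₀ m : ℝ} (hT : 0 < T) (hab : a < b) (ham : |a| ≤ m) (hbm : |b| ≤ m)
    {Λa Λb : ℝ → ℝ}
    (ca : Continuous Λa) (cb : Continuous Λb) (hΛ : ∀ t, Λa t < Λb t)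
    {ξa ξb : ℝ → ℝ} {S S' : Set (ℝ × ℝ)}
    {X Xb : ℝ × ℝ → ℝ}
    (hξa : ∀ t ∈ Icc 0 T, ξa t = x₀ + ∫ τ in (0:ℝ)..t, Λa τ)
    (hξb : ∀ t ∈ Icc 0 T, ξb t = x₀ + ∫ τ in (0:ℝ)..t, Λb τ)
    (hS : ∀ p, p ∈ S ↔ p.1 ∈ Icc 0 T ∧ a * p.1 ≤ p.2 ∧ p.2 ≤ b * p.1)
    (hS' : ∀ p, p ∈ S' ↔ p.1 ∈ Icc 0 T ∧ ξa p.1 ≤ p.2 ∧ p.2 ≤ ξb p.1)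
    (hX : ∀ p ∈ S, X p = if p.1 = 0 then x₀ else
      ((p.2 - a * p.1) * ξb p.1 + (b * p.1 - p.2) * ξa p.1) / ((b - a) * p.1))
    (hXb : ∀ p ∈ S', Xb p = if p.1 = 0 then 0 else
      ((p.2 - ξa p.1) * (b * p.1) + (ξb p.1 - p.2) * (a * p.1)) / (ξb p.1 - ξa p.1)) :
    SetupT T S S' X Xb := by
  let Q : ℝ → ℝ := fun t => (avgT Λb t - avgT Λa t) / (b - a)
  let P : ℝ → ℝ := fun t => x₀ + (b * (∫ τ in (0:ℝ)..t, Λa τ) - a * (∫ τ in (0:ℝ)..t, Λb τ)) / (b - a)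
  have hba : b - a ≠ 0 := (sub_pos.2 hab).ne'
  have nQ : NiceT Q := (niceT_avg cb).comb (niceT_avg ca) _
  have hav : ∀ t, 0 < avgT Λb t - avgT Λa t := fun t => sub_pos.2 (avgT_lt ca cb hΛ t)
  have hQ : ∀ t, 0 < Q t := fun t => div_pos (hav t) (sub_pos.2 hab)
  have cP : ContDiff ℝ 1 P := by
    have h1 := contDiff_integralT ca
    have h2 := contDiff_integralT cb
    exact contDiff_const.add (((contDiff_const.mul h1).sub (contDiff_const.mul h2)).div_const _)
  have ea : ∀ t ∈ Icc 0 T, Q t * (a * t) + P t = ξa t := by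
    intro t ht
    rw [hξa t ht]
    simp only [P, Q]
    rw [← mul_avgT, ← mul_avgT]
    field_simp
    ring
  have eb : ∀ t ∈ Icc 0 T, Q t * (b * t) + P t = ξb t := by
    intro t ht
    rw [hξb t ht]
    simp only [P, Q]
    rw [← mul_avgT, ← mul_avgT]
    field_simp
    ring
  have eP0 : P 0 = x₀ := by simp [P]
  have bd : ∀ {t u : ℝ}, 0 ≤ t → a * t ≤ u → u ≤ b * t → |u| ≤ m * t := by
    intro t u ht h1 h2
    have := abs_le.1 ham
    have := abs_le.1 hbm
    rw [abs_le]; constructor <;> nlinarith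
  refine setup_common (Q := Q) (P := P) (lo := fun t => a * t) (hi := fun t => b * t)
    (fun t _ => hQ t) nQ.1.continuousOn hS ?_ ?_ ?_ ?_ ?_ ?_
  · intro p
    rw [hS']
    refine and_congr_right fun ht => ?_
    rw [eb _ ht, ea _ ht]
  · intro p hp
    have ht := ((hS p).1 hp)
    rw [hX p hp]
    split_ifs with h0
    · have : p.2 = 0 := by
        have h1 := ht.2.1; have h2 := ht.2.2
        rw [h0] at h1 h2
        linarith
      rw [this, h0, eP0]; simp
    · rw [← ea _ ht.1, ← eb _ ht.1]
      field_simp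
      ring
  · intro p hp
    have ht := ((hS' p).1 hp)
    have hne := (hQ p.1).ne'
    rw [hXb p hp]
    have e1 := ea _ ht.1
    have e2 := eb _ ht.1
    split_ifs with h0
    · have : p.2 = x₀ := by
        have h1 := ht.2.1; have h2 := ht.2.2
        rw [h0] at h1 h2 e1 e2
        rw [← e1, eP0] at h1
        rw [← e2, eP0] at h2
        linarith
      rw [this, h0, eP0]; simp
    · rw [← e1, ← e2]
      have : Q p.1 * (b * p.1) + P p.1 - (Q p.1 * (a * p.1) + P p.1) = (b - a) * Q p.1 * p.1 := by
        ring
      rw [this]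
      field_simp
      ring
  · exact uniqueDiffOn_sectorT (α := 0) (β := 0) hT (by simpa using hS) (by nlinarith)
  · refine (goodT_nice (S := S) (P1 := fun _ => 0) (M := fun _ => m) nQ contDiff_const cP
      continuous_const (fun p hp => ((hS p).1 hp).1.1) ?_).congr ?_ (fun _ _ => rfl)
    · intro p hp
      obtain ⟨h0, h1, h2⟩ := (hS p).1 hp
      simpa using bd h0.1 h1 h2
    · intro p hp; simp
  · refine (goodT_nice (S := S') (P1 := P) (P2 := fun _ => 0) (M := fun t => Q t * m) (nQ.inv hQ) cP
      contDiff_const (nQ.1.mul continuous_const) (fun p hp => ((hS' p).1 hp).1.1) ?_).congr ?_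
      (fun _ _ => rfl)
    · intro p hp
      obtain ⟨h0, h1, h2⟩ := (hS' p).1 hp
      rw [← ea _ h0] at h1
      rw [← eb _ h0] at h2
      have hq := hQ p.1
      have hw : p.2 - P p.1 = Q p.1 * ((p.2 - P p.1) / Q p.1) := by field_simp
      rw [hw, abs_mul, abs_of_pos hq, mul_assoc]
      apply mul_le_mul_of_nonneg_left _ hq.le
      apply bd h0.1
      · rw [le_div_iff₀ hq]; linarith
      · rw [div_le_iff₀ hq]; linarith
    · intro p hp; simp

theorem extT {T : ℝ} (hT : 0 < T) {f : ℝ → ℝ} (hf : ContinuousOn f (Icc 0 T)) :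
    ∃ Λ : ℝ → ℝ, Continuous Λ ∧ (∀ t, ∃ s ∈ Icc 0 T, Λ t = f s) ∧
      ∀ t ∈ Icc 0 T, ∫ τ in (0:ℝ)..t, f τ = ∫ τ in (0:ℝ)..t, Λ τ := by
  refine ⟨fun t => f (projIcc 0 T hT.le t), ?_, fun t => ⟨_, (projIcc 0 T hT.le t).2, rfl⟩, ?_⟩
  · exact hf.comp_continuous (continuous_subtype_val.comp continuous_projIcc)
      (fun t => (projIcc 0 T hT.le t).2)
  · intro t ht
    apply intervalIntegral.integral_congr
    intro s hs
    rw [uIcc_of_le ht.1] at hs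
    have : s ∈ Icc 0 T := ⟨hs.1, hs.2.trans ht.2⟩
    simp only
    rw [projIcc_of_mem _ this]

theorem contDiffOn_extT {T c : ℝ} (hT : 0 < T) {f : ℝ → ℝ} (hf : ContinuousOn f (Icc 0 T)) :
    ContDiffOn ℝ 1 (fun t => c + ∫ τ in (0:ℝ)..t, f τ) (Icc 0 T) := by
  obtain ⟨Λ, hc, -, he⟩ := extT hT hf
  refine (contDiff_const.add (contDiff_integralT hc)).contDiffOn.congr (f := fun t =>
    c + ∫ τ in (0:ℝ)..t, Λ τ) ?_
  intro t ht
  rw [he t ht]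

theorem abs_intT {m t : ℝ} (ht : 0 ≤ t) {f : ℝ → ℝ} (hf : ∀ s, |f s| ≤ m) :
    |∫ τ in (0:ℝ)..t, f τ| ≤ m * t := by
  have := intervalIntegral.norm_integral_le_of_norm_le_const (a := 0) (b := t) (C := m) (f := f)
    (fun x _ => hf x)
  simpa [abs_of_nonneg ht] using this

theorem setup_all
    (n : ℕ) (C : Ctx n) (hC : C.IsHyperbolicData)
    (ε ηmin gradLam : ℝ)
    (lamLo lamHi : Fin (n + 1) → ℝ)
    (hη : 0 < ηmin)
    (hLam2Mem : ∀ y₁ y₂ i, C.lam2 y₁ y₂ i ∈ Icc (lamLo i) (lamHi i))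
    (hgap : ∀ i : Fin n, ηmin ≤ lamLo i.succ - lamHi i.castSucc)
    (hLip : ∀ i, LipschitzWith (Real.toNNReal gradLam) (fun y => C.lam y i))
    (hLip2 : ∀ i, LipschitzWith (Real.toNNReal gradLam)
      (fun q : Rd n × Rd n => C.lam2 q.1 q.2 i))
    (zbar : Comp n) (x₀ : ℝ) (hx₀ : x₀ ∈ Icc (-ε) ε)
    (hPC1 : C.IsPC1 zbar)
    (hsmall2 : ε ≤ C.ℓ / 6)
    (hsmall3 : C.T ≤ C.ℓ / (6 * C.lmax)) (j : Fin (n + 2)) :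
    SetupT C.T (C.sector j) (C.physSector x₀ zbar j) (C.xTrafo x₀ zbar j)
      (C.xbarTrafo x₀ zbar j) := by
  have hT := hC.hT
  have hl := hC.hl
  have hm := hC.hlmax
  have hTm : ∀ t ∈ Icc 0 C.T, C.lmax * t ≤ C.ℓ / 6 := by
    intro t ht
    have := ht.2.trans hsmall3
    rw [le_div_iff₀ (by positivity)] at this
    linarith
  have hst : ∀ k, ∀ t ∈ Icc 0 C.T, |C.s k * t| ≤ C.ℓ / 6 := by
    intro k t ht
    rw [abs_mul, abs_of_nonneg ht.1]
    exact (mul_le_mul_of_nonneg_right (hC.hsBound k) ht.1).trans (hTm t ht)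
  -- continuity of speeds along curves
  have hzc : ∀ j, ContinuousOn (zbar j) (C.sector j) := fun j => (hPC1 j).continuousOn
  have cS : ∀ k : Fin (n + 1), ContinuousOn (fun τ =>
      C.lam2 (zbar k.castSucc (τ, C.s k * τ)) (zbar k.succ (τ, C.s k * τ)) k) (Icc 0 C.T) := by
    intro k
    have hc : ContinuousOn (fun τ : ℝ => (τ, C.s k * τ)) (Icc 0 C.T) :=
      Continuous.continuousOn (by fun_prop)
    refine (hLip2 k).continuous.comp_continuousOn (ContinuousOn.prodMk ?_ ?_)
    · refine (hzc k.castSucc).comp hc ?_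
      intro t ht
      have hb := abs_le.1 (hst k t ht)
      have := hTm t ht
      refine ⟨ht, ?_, ?_⟩
      · split_ifs with h
        · simp only; linarith
        · have : C.s ⟨(k.castSucc : ℕ) - 1, by have := k.isLt; simp only [Fin.val_castSucc]; omega⟩ ≤ C.s k := by
            apply hC.hsMono.monotone
            rw [Fin.le_def]; simp
          exact mul_le_mul_of_nonneg_right this ht.1
      · have : ¬ ((k.castSucc : ℕ) = n + 1) := by have := k.isLt; simp; omega
        rw [dif_neg this]
        exact le_of_eq rfl
    · refine (hzc k.succ).comp hc ?_
      intro t ht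
      have hb := abs_le.1 (hst k t ht)
      have := hTm t ht
      refine ⟨ht, ?_, ?_⟩
      · have : ¬ ((k.succ : ℕ) = 0) := by simp
        rw [dif_neg this]
        exact le_of_eq rfl
      · split_ifs with h
        · simp only; linarith
        · have : C.s k ≤ C.s ⟨(k.succ : ℕ), by have := k.isLt; simp at h ⊢; omega⟩ := by
            apply hC.hsMono.monotone
            rw [Fin.le_def]; simp
          exact mul_le_mul_of_nonneg_right this ht.1
  have dS : ∀ k, ContDiffOn ℝ 1 (C.xiS x₀ zbar k) (Icc 0 C.T) := fun k =>
    contDiffOn_extT hT (cS k)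
  have dL : ContDiffOn ℝ 1 (C.xiL zbar) (Icc 0 C.T) := by
    refine contDiffOn_extT hT ((hLip _).continuous.comp_continuousOn ?_)
    refine (hzc 0).comp (Continuous.continuousOn (by fun_prop)) ?_
    intro t ht
    have hb := abs_le.1 (hst 0 t ht)
    have := hTm t ht
    refine ⟨ht, ?_, ?_⟩
    · simp
    · have h0 : ¬ (((0 : Fin (n + 2)) : ℕ) = n + 1) := by simp
      rw [dif_neg h0]
      change -C.ℓ + C.lmax * t ≤ C.s 0 * t
      linarith
  have dR : ContDiffOn ℝ 1 (C.xiR zbar) (Icc 0 C.T) := by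
    refine contDiffOn_extT hT ((hLip _).continuous.comp_continuousOn ?_)
    refine (hzc _).comp (Continuous.continuousOn (by fun_prop)) ?_
    intro t ht
    have hb := fun k => abs_le.1 (hst k t ht)
    have := hTm t ht
    refine ⟨ht, ?_, ?_⟩
    · have h0 : ¬ (((Fin.last (n + 1)) : ℕ) = 0) := by simp
      rw [dif_neg h0]
      have := hb ⟨((Fin.last (n + 1)) : ℕ) - 1, by simp⟩
      simp only
      linarith
    · simp
  have bS : ∀ k, ∀ t ∈ Icc 0 C.T, |C.xiS x₀ zbar k t - x₀| ≤ C.ℓ / 6 := by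
    intro k t ht
    refine le_trans ?_ (hTm t ht)
    simpa [Ctx.xiS] using abs_intT ht.1 (fun τ => hC.hlam2Bound
      (zbar k.castSucc (τ, C.s k * τ)) (zbar k.succ (τ, C.s k * τ)) k)
  have bL : ∀ t ∈ Icc 0 C.T, |C.xiL zbar t + C.ℓ| ≤ C.ℓ / 6 := by
    intro t ht
    refine le_trans ?_ (hTm t ht)
    simpa [Ctx.xiL] using abs_intT ht.1 (fun τ => hC.hlamBound
      (zbar 0 (τ, -C.ℓ + C.lmax * τ)) (Fin.last n))
  have bR : ∀ t ∈ Icc 0 C.T, |C.xiR zbar t - C.ℓ| ≤ C.ℓ / 6 := by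
    intro t ht
    refine le_trans ?_ (hTm t ht)
    simpa [Ctx.xiR] using abs_intT ht.1 (fun τ => hC.hlamBound
      (zbar (Fin.last (n + 1)) (τ, C.ℓ - C.lmax * τ)) 0)
  obtain ⟨hx1, hx2⟩ := hx₀
  by_cases h1 : (j : ℕ) = 0
  · obtain rfl : j = 0 := Fin.ext h1
    have h0 : ¬ (((0 : Fin (n + 2)) : ℕ) = n + 1) := by simp
    refine setup_outer (α := -C.ℓ) (a := C.lmax) (β := 0) (b := C.s 0) (ξa := C.xiL zbar)
      (ξb := C.xiS x₀ zbar 0) hT ?_ ?_ dL (dS 0) ?_ ?_ ?_ ?_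
    · intro t ht
      have := abs_le.1 (hst 0 t ht)
      have := hTm t ht
      linarith
    · intro t ht
      have := abs_le.1 (bS 0 t ht)
      have := abs_le.1 (bL t ht)
      linarith
    · intro p
      simp only [Ctx.sector, mem_setOf_eq, dif_neg h0, dif_pos h1, zero_add]
      exact Iff.rfl
    · intro p
      simp only [Ctx.physSector, mem_setOf_eq, dif_neg h0, dif_pos h1]
      exact Iff.rfl
    · intro p _
      simp only [Ctx.xTrafo, dif_pos h1, zero_add]
    · intro p _
      simp only [Ctx.xbarTrafo, dif_pos h1, zero_add]
  by_cases h2 : (j : ℕ) = n + 1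
  · obtain rfl : j = Fin.last (n + 1) := Fin.ext h2
    have hlast : (⟨((Fin.last (n + 1) : Fin (n + 2)) : ℕ) - 1, by simp⟩ : Fin (n + 1)) =
      Fin.last n := Fin.ext (by simp)
    refine setup_outer (α := 0) (a := C.s (Fin.last n)) (β := C.ℓ) (b := -C.lmax)
      (ξa := C.xiS x₀ zbar (Fin.last n))
      (ξb := C.xiR zbar) hT ?_ ?_ (dS _) dR ?_ ?_ ?_ ?_
    · intro t ht
      have := abs_le.1 (hst (Fin.last n) t ht)
      have := hTm t ht
      linarith
    · intro t ht
      have := abs_le.1 (bS (Fin.last n) t ht)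
      have := abs_le.1 (bR t ht)
      linarith
    · intro p
      simp only [Ctx.sector, mem_setOf_eq, dif_neg h1, dif_pos h2, zero_add, neg_mul,
        ← sub_eq_add_neg, hlast]
    · intro p
      simp only [Ctx.physSector, mem_setOf_eq, dif_neg h1, dif_pos h2, hlast]
    · intro p _
      simp only [Ctx.xTrafo, dif_neg h1, dif_pos h2, zero_add, neg_mul,
        ← sub_eq_add_neg]
    · intro p _
      simp only [Ctx.xbarTrafo, dif_neg h1, dif_pos h2, zero_add, neg_mul,
        ← sub_eq_add_neg]
  · have hj := j.isLt
    set ka : Fin (n + 1) := ⟨(j : ℕ) - 1, by omega⟩ with hka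
    set kb : Fin (n + 1) := ⟨(j : ℕ), by omega⟩ with hkb
    have hlt : ka < kb := by rw [Fin.lt_def]; simp only [hka, hkb]; omega
    obtain ⟨Λa, ca, ra, ea⟩ := extT hT (cS ka)
    obtain ⟨Λb, cb, rb, eb⟩ := extT hT (cS kb)
    refine setup_middle (a := C.s ka) (b := C.s kb) (x₀ := x₀) (m := C.lmax) (Λa := Λa) (Λb := Λb)
      (ξa := C.xiS x₀ zbar ka) (ξb := C.xiS x₀ zbar kb) hT (hC.hsMono hlt) (hC.hsBound _)
      (hC.hsBound _) ca cb ?_ ?_ ?_ ?_ ?_ ?_ ?_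
    · intro t
      obtain ⟨s, _, hs⟩ := ra t
      obtain ⟨s', _, hs'⟩ := rb t
      rw [hs, hs']
      let i : Fin n := ⟨(j : ℕ) - 1, by omega⟩
      have hg := hgap i
      have i1 : i.castSucc = ka := rfl
      have i2 : i.succ = kb := Fin.ext (by simp [i, hkb]; omega)
      rw [i1, i2] at hg
      have u1 := (hLam2Mem (zbar ka.castSucc (s, C.s ka * s)) (zbar ka.succ (s, C.s ka * s)) ka).2
      have u2 := (hLam2Mem (zbar kb.castSucc (s', C.s kb * s')) (zbar kb.succ (s', C.s kb * s')) kb).1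
      linarith
    · intro t ht
      rw [← ea t ht]; rfl
    · intro t ht
      rw [← eb t ht]; rfl
    · intro p
      simp only [Ctx.sector, mem_setOf_eq, dif_neg h1, dif_neg h2]
      exact Iff.rfl
    · intro p
      simp only [Ctx.physSector, mem_setOf_eq, dif_neg h1, dif_neg h2]
      exact Iff.rfl
    · intro p _
      simp only [Ctx.xTrafo, dif_neg h1, dif_neg h2]
      rfl
    · intro p _
      simp only [Ctx.xbarTrafo, dif_neg h1, dif_neg h2]
      rfl

/-- equivalence of the semilinear problem in the reference space
and in physical coordinates, and strict hyperbolicity of `Ā^{(z̄,x₀),j}`. -/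
theorem statement3
    (n : ℕ) (C : Ctx n) (hC : C.IsHyperbolicData)
    (ε M₁ ηmin gradLam cmax Ynorm : ℝ)
    (lamLo lamHi : Fin (n + 1) → ℝ)
    (hη : 0 < ηmin)
    (hLamMem : ∀ y i, C.lam y i ∈ Icc (lamLo i) (lamHi i))
    (hLam2Mem : ∀ y₁ y₂ i, C.lam2 y₁ y₂ i ∈ Icc (lamLo i) (lamHi i))
    (hgap : ∀ i : Fin n, ηmin ≤ lamLo i.succ - lamHi i.castSucc)
    (hsMem : ∀ k, C.s k ∈ Icc (lamLo k) (lamHi k))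
    (hgradLam : 0 ≤ gradLam)
    (hLip : ∀ i, LipschitzWith (Real.toNNReal gradLam) (fun y => C.lam y i))
    (hLip2 : ∀ i, LipschitzWith (Real.toNNReal gradLam)
      (fun q : Rd n × Rd n => C.lam2 q.1 q.2 i))
    (hg : ContDiff ℝ 1 (fun q : ℝ × ℝ × Rd n => C.g q.1 q.2.1 q.2.2))
    (uL uR : Rd n) (J : Set (Rd n × Rd n)) (hJ : J ∈ nhds (uL, uR))
    (yhat : Fin (n + 2) → Rd n) (hyhat0 : yhat 0 = uL)
    (hyhatN : yhat (Fin.last (n + 1)) = uR)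
    (hspeed : ∀ k : Fin (n + 1), C.s k = C.lam2 (yhat k.castSucc) (yhat k.succ) k)
    (zbar : Comp n) (x₀ : ℝ) (hx₀ : x₀ ∈ Icc (-ε) ε)
    (hPC1 : C.IsPC1 zbar) (hYnorm : C.PC1BoundedBy zbar Ynorm)
    (hM1L : ∀ x ∈ Icc (-C.ℓ) (0:ℝ),
      ‖derivWithin (fun x' => zbar 0 (0, x')) (Icc (-C.ℓ) 0) x‖ ≤ M₁)
    (hM1R : ∀ x ∈ Icc (0:ℝ) C.ℓ,
      ‖derivWithin (fun x' => zbar (Fin.last (n + 1)) (0, x')) (Icc 0 C.ℓ) x‖ ≤ M₁)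
    (hJ0 : (zbar 0 (0, 0), zbar (Fin.last (n + 1)) (0, 0)) ∈ J)
    (hcmax : ∀ j : Fin (n + 2), (j : ℕ) ≠ 0 → (j : ℕ) ≠ n + 1 →
      ‖zbar j (0, 0) - yhat j‖ ≤ cmax)
    (hsmall1 : gradLam * (C.T * Ynorm + cmax) ≤ ηmin / 8)
    (hsmall2 : ε ≤ C.ℓ / 6)
    (hsmall3 : C.T ≤ C.ℓ / (6 * C.lmax)) :
    -- reference-space solution transforms to a physical classical solution …
    (∀ j : Fin (n + 2), ∀ ybarj : ℝ × ℝ → Rd n,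
      ContDiffOn ℝ 1 ybarj (C.sector j) →
      (∀ p ∈ C.sector j,
        fderivWithin ℝ ybarj (C.sector j) p (1, 0) +
          C.AbarOp x₀ zbar j p (fderivWithin ℝ ybarj (C.sector j) p (0, 1)) =
          C.g p.1 (C.xTrafo x₀ zbar j p) (ybarj p)) →
      (ContDiffOn ℝ 1 (fun p : ℝ × ℝ => ybarj (p.1, C.xbarTrafo x₀ zbar j p))
          (C.physSector x₀ zbar j) ∧
        ∀ p ∈ C.physSector x₀ zbar j,
          fderivWithin ℝ (fun q : ℝ × ℝ => ybarj (q.1, C.xbarTrafo x₀ zbar j q))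
              (C.physSector x₀ zbar j) p (1, 0) +
            fderiv ℝ C.f (zbar j (p.1, C.xbarTrafo x₀ zbar j p))
              (fderivWithin ℝ (fun q : ℝ × ℝ => ybarj (q.1, C.xbarTrafo x₀ zbar j q))
                (C.physSector x₀ zbar j) p (0, 1)) =
            C.g p.1 p.2 (ybarj (p.1, C.xbarTrafo x₀ zbar j p)))) ∧
    -- … and conversely
    (∀ j : Fin (n + 2), ∀ yphys : ℝ × ℝ → Rd n,
      ContDiffOn ℝ 1 yphys (C.physSector x₀ zbar j) →
      (∀ p ∈ C.physSector x₀ zbar j,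
        fderivWithin ℝ yphys (C.physSector x₀ zbar j) p (1, 0) +
          fderiv ℝ C.f (zbar j (p.1, C.xbarTrafo x₀ zbar j p))
            (fderivWithin ℝ yphys (C.physSector x₀ zbar j) p (0, 1)) =
          C.g p.1 p.2 (yphys p)) →
      (ContDiffOn ℝ 1 (fun p : ℝ × ℝ => yphys (p.1, C.xTrafo x₀ zbar j p))
          (C.sector j) ∧
        ∀ p ∈ C.sector j,
          fderivWithin ℝ (fun q : ℝ × ℝ => yphys (q.1, C.xTrafo x₀ zbar j q))
              (C.sector j) p (1, 0) +
            C.AbarOp x₀ zbar j p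
              (fderivWithin ℝ (fun q : ℝ × ℝ => yphys (q.1, C.xTrafo x₀ zbar j q))
                (C.sector j) p (0, 1)) =
            C.g p.1 (C.xTrafo x₀ zbar j p)
              (yphys (p.1, C.xTrafo x₀ zbar j p)))) ∧
    -- under the smallness assumptions, `Ā^{(z̄,x₀),j}` is strictly hyperbolic
    (∀ j : Fin (n + 2), ∀ p ∈ C.sector j,
      ∃ μ : Fin (n + 1) → ℝ, StrictMono μ ∧
        ∃ w : Fin (n + 1) → Rd n, ∀ i,
          w i ≠ 0 ∧ C.AbarOp x₀ zbar j p (w i) = μ i • w i) := by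
  have hall := setup_all n C hC ε ηmin gradLam lamLo lamHi hη hLam2Mem hgap hLip hLip2 zbar x₀ hx₀
    hPC1 hsmall2 hsmall3
  simp only [SetupT] at hall
  choose Q q1 q2 q3 q4 q5 q6 q7 q8 q9 q10 q11 using hall
  have key := fun j : Fin (n + 2) => abs_main (E := Rd n) (fun p hp => q1 j _ (q3 j p hp))
    ((q2 j).comp continuousOn_fst (q3 j))
    (((q2 j).inv₀ (fun t ht => (q1 j t ht).ne')).comp continuousOn_fst (q4 j)) (q5 j) (q6 j)
    (q7 j) (q8 j) (q9 j) (q10 j) (q11 j) (fun p => fderiv ℝ C.f (zbar j p)) C.g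
  refine ⟨fun j => (key j).1, fun j => (key j).2.1, fun j p hp => ?_⟩
  have hpos := (key j).2.2 p hp
  refine ⟨fun i => (fderivWithin ℝ (C.xTrafo x₀ zbar j) (C.sector j) p (0, 1))⁻¹ *
    (C.lam (zbar j p) i - fderivWithin ℝ (C.xTrafo x₀ zbar j) (C.sector j) p (1, 0)), ?_,
    fun i => C.rvec (zbar j p) i, fun i => ⟨?_, ?_⟩⟩
  · intro i k hik
    have := hC.hlamMono (zbar j p) hik
    apply mul_lt_mul_of_pos_left _ (inv_pos.2 hpos)
    linarith
  · have := hC.hrNorm (zbar j p) i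
    intro h0
    have h0 : C.rvec (zbar j p) i = 0 := h0
    rw [h0] at this
    simp at this
  · simp only [Ctx.AbarOp]
    rw [hC.hEig, ← sub_smul, smul_smul]
end
end

section
/- Let f ∈ C¹(ℝ²) and l, u ∈ C¹(ℝ³;ℝⁿ) with continuous derivatives. Then I(t,x̄) = ∫_{f(t,x̄)}^{t} l_s(s,t,x̄)ᵀ u(s,t,x̄) ds is continuously differentiable, and I_x̄(t,x̄) = ∫_{f(t,x̄)}^{t} (l_sᵀ u_x̄ − l_x̄ᵀ u_s)(s,t,x̄) ds − l_s(f(t,x̄),t,x̄)ᵀ u(f(t,x̄),t,x̄) f_x̄(t,x̄) + l_x̄(t,t,x̄)ᵀ u(t,t,x̄) − l_x̄(f(t,x̄),t,x̄)ᵀ u(f(t,x̄),t,x̄). -/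
open Set MeasureTheory intervalIntegral
open scoped RealInnerProductSpace

noncomputable section

lemma aux_partial {E₁ E₂ F : Type*} [NormedAddCommGroup E₁] [NormedSpace ℝ E₁]
    [NormedAddCommGroup E₂] [NormedSpace ℝ E₂] [NormedAddCommGroup F] [NormedSpace ℝ F]
    (f : E₁ → E₂ → F) (f₁ : E₁ → E₂ → E₁ →L[ℝ] F) (f₂ : E₁ → E₂ → E₂ →L[ℝ] F)
    (h₁ : ∀ x y, HasFDerivAt (fun x' => f x' y) (f₁ x y) x)
    (h₂ : ∀ x y, HasFDerivAt (fun y' => f x y') (f₂ x y) y)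
    (c₁ : Continuous (fun z : E₁ × E₂ => f₁ z.1 z.2))
    (c₂ : Continuous (fun z : E₁ × E₂ => f₂ z.1 z.2)) (z : E₁ × E₂) :
    HasFDerivAt (fun z : E₁ × E₂ => f z.1 z.2) ((f₁ z.1 z.2).coprod (f₂ z.1 z.2)) z :=
  (hasStrictFDerivAt_uncurry_coprod (f := f) (f₁ := f₁) (f₂ := f₂)
    (Filter.Eventually.of_forall fun v => h₁ v.1 v.2)
    (Filter.Eventually.of_forall fun v => h₂ v.1 v.2)
    c₁.continuousAt c₂.continuousAt).hasFDerivAt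

lemma aux_param {H : Type*} [NormedAddCommGroup H] [NormedSpace ℝ H] [ProperSpace H]
    (F : H → ℝ → ℝ) (F' : H → ℝ → H →L[ℝ] ℝ)
    (hF : Continuous (fun z : H × ℝ => F z.1 z.2))
    (hF' : Continuous (fun z : H × ℝ => F' z.1 z.2))
    (hd : ∀ x s, HasFDerivAt (fun x' => F x' s) (F' x s) x) (a b : ℝ) (x₀ : H) :
    HasFDerivAt (fun x => ∫ s in a..b, F x s) (∫ s in a..b, F' x₀ s) x₀ := by
  obtain ⟨C, hC⟩ := ((isCompact_closedBall x₀ 1).prod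
    (isCompact_uIcc (a := a) (b := b))).exists_bound_of_continuousOn hF'.continuousOn
  have c1 : ∀ x, Continuous (F x) := fun x => hF.comp (by fun_prop : Continuous fun s => (x, s))
  have c2 : ∀ x, Continuous (F' x) := fun x => hF'.comp (by fun_prop : Continuous fun s => (x, s))
  refine intervalIntegral.hasFDerivAt_integral_of_dominated_of_fderiv_le
    (s := Metric.closedBall x₀ 1) (bound := fun _ => C)
    (Metric.closedBall_mem_nhds x₀ one_pos) ?_ ?_ ?_ ?_ ?_ ?_
  · exact Filter.Eventually.of_forall fun x => (c1 x).aestronglyMeasurable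
  · exact (c1 x₀).intervalIntegrable _ _
  · exact (c2 x₀).aestronglyMeasurable
  · exact Filter.Eventually.of_forall fun t ht x hx => hC (x, t) ⟨hx, uIoc_subset_uIcc ht⟩
  · exact intervalIntegrable_const
  · exact Filter.Eventually.of_forall fun t ht x hx => hd x t

section main
variable {V E : Type*} [NormedAddCommGroup V] [InnerProductSpace ℝ V]
  [NormedAddCommGroup E] [NormedSpace ℝ E] [ProperSpace E]

def dS (L : ℝ × E → V) (s : ℝ) (p : E) : V := fderiv ℝ L (s, p) (1, 0)
def dP (L : ℝ × E → V) (s : ℝ) (p : E) : E →L[ℝ] V :=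
  (fderiv ℝ L (s, p)).comp (ContinuousLinearMap.inr ℝ ℝ E)

def KK (L U : ℝ × E → V) (a : ℝ) (w : E × E) : ℝ := ∫ s in (0 : ℝ)..a, ⟪dS L s w.1, U (s, w.2)⟫

def PP (L U : ℝ × E → V) (a : ℝ) (w : E × E) : E →L[ℝ] ℝ :=
  (innerSL ℝ (U (a, w.2))).comp (dP L a w.1) - (innerSL ℝ (U (0, w.2))).comp (dP L 0 w.1)
    - ∫ s in (0 : ℝ)..a, (innerSL ℝ (dS U s w.2)).comp (dP L s w.1)

def QQ (L U : ℝ × E → V) (a : ℝ) (w : E × E) : E →L[ℝ] ℝ :=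
  ∫ s in (0 : ℝ)..a, (innerSL ℝ (dS L s w.1)).comp (dP U s w.2)

variable {L U : ℝ × E → V}

lemma dS_cont (hL : ContDiff ℝ 1 L) {X : Type*} [TopologicalSpace X] {g : X → ℝ} {h : X → E}
    (hg : Continuous g) (hh : Continuous h) : Continuous fun z => dS L (g z) (h z) :=
  ((hL.continuous_fderiv one_ne_zero).comp (hg.prodMk hh)).clm_apply continuous_const

lemma dP_cont (hL : ContDiff ℝ 1 L) {X : Type*} [TopologicalSpace X] {g : X → ℝ} {h : X → E}
    (hg : Continuous g) (hh : Continuous h) : Continuous fun z => dP L (g z) (h z) :=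
  ((hL.continuous_fderiv one_ne_zero).comp (hg.prodMk hh)).clm_comp continuous_const

lemma dS_has (hL : ContDiff ℝ 1 L) (s : ℝ) (p : E) :
    HasDerivAt (fun s' => L (s', p)) (dS L s p) s := by
  have h := (hL.differentiable one_ne_zero (s, p)).hasFDerivAt
  exact h.comp_hasDerivAt s ((hasDerivAt_id s).prodMk (hasDerivAt_const s p))

lemma dP_has (hL : ContDiff ℝ 1 L) (s : ℝ) (p : E) :
    HasFDerivAt (fun p' => L (s, p')) (dP L s p) p := by
  have h := (hL.differentiable one_ne_zero (s, p)).hasFDerivAt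
  exact h.comp p (hasFDerivAt_prodMk_right s p)

lemma innerSL_cont {X : Type*} [TopologicalSpace X] {g : X → V} {h : X → E →L[ℝ] V}
    (hg : Continuous g) (hh : Continuous h) :
    Continuous fun z => (innerSL ℝ (g z)).comp (h z) :=
  ((innerSL ℝ (E := V)).continuous.comp hg).clm_comp hh

lemma KK_parts (hL : ContDiff ℝ 1 L) (hU : ContDiff ℝ 1 U) (a : ℝ) (w : E × E) :
    KK L U a w = ⟪U (a, w.2), L (a, w.1)⟫ - ⟪U (0, w.2), L (0, w.1)⟫
      - ∫ s in (0 : ℝ)..a, ⟪dS U s w.2, L (s, w.1)⟫ := by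
  have cL := hL.continuous
  have cU := hU.continuous
  have i1 : Continuous fun s => ⟪dS U s w.2, L (s, w.1)⟫ :=
    (dS_cont hU continuous_id continuous_const).inner (by fun_prop)
  have i2 : Continuous fun s => ⟪U (s, w.2), dS L s w.1⟫ :=
    Continuous.inner (by fun_prop) (dS_cont hL continuous_id continuous_const)
  have key := integral_eq_sub_of_hasDerivAt (a := 0) (b := a)
    (f := fun s => ⟪U (s, w.2), L (s, w.1)⟫)
    (f' := fun s => ⟪U (s, w.2), dS L s w.1⟫ + ⟪dS U s w.2, L (s, w.1)⟫)
    (fun s _ => (dS_has hU s w.2).inner ℝ (dS_has hL s w.1))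
    ((i2.add i1).intervalIntegrable _ _)
  rw [intervalIntegral.integral_add (i2.intervalIntegrable _ _) (i1.intervalIntegrable _ _)] at key
  have : KK L U a w = ∫ s in (0 : ℝ)..a, ⟪U (s, w.2), dS L s w.1⟫ := by
    simp only [KK, real_inner_comm]
  rw [this]; linarith

lemma inner_has (v : V) {g : E → V} {g' : E →L[ℝ] V} {p : E} (h : HasFDerivAt g g' p) :
    HasFDerivAt (fun p => ⟪v, g p⟫) ((innerSL ℝ v).comp g') p :=
  (innerSL ℝ v).hasFDerivAt.comp p h

lemma PP_has (hL : ContDiff ℝ 1 L) (hU : ContDiff ℝ 1 U) (a : ℝ) (p q : E) :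
    HasFDerivAt (fun p' => KK L U a (p', q)) (PP L U a (p, q)) p := by
  have cL := hL.continuous
  simp only [KK_parts hL hU, PP]
  refine ((inner_has _ (dP_has hL a p)).sub (inner_has _ (dP_has hL 0 p))).sub ?_
  refine aux_param (fun p s => ⟪dS U s q, L (s, p)⟫)
    (fun p s => (innerSL ℝ (dS U s q)).comp (dP L s p)) ?_ ?_ ?_ 0 a p
  · exact (dS_cont hU continuous_snd continuous_const).inner (by fun_prop)
  · exact innerSL_cont (dS_cont hU continuous_snd continuous_const)
      (dP_cont hL continuous_snd continuous_fst)
  · exact fun p s => inner_has _ (dP_has hL s p)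

lemma QQ_has (hL : ContDiff ℝ 1 L) (hU : ContDiff ℝ 1 U) (a : ℝ) (p q : E) :
    HasFDerivAt (fun q' => KK L U a (p, q')) (QQ L U a (p, q)) q := by
  have cU := hU.continuous
  refine aux_param (fun q s => ⟪dS L s p, U (s, q)⟫)
    (fun q s => (innerSL ℝ (dS L s p)).comp (dP U s q)) ?_ ?_ ?_ 0 a q
  · exact (dS_cont hL continuous_snd continuous_const).inner (by fun_prop)
  · exact innerSL_cont (dS_cont hL continuous_snd continuous_const)
      (dP_cont hU continuous_snd continuous_fst)
  · exact fun p s => inner_has _ (dP_has hU s p)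

lemma PP_cont (hL : ContDiff ℝ 1 L) (hU : ContDiff ℝ 1 U) :
    Continuous fun z : ℝ × (E × E) => PP L U z.1 z.2 := by
  have cU := hU.continuous
  unfold PP
  refine ((innerSL_cont (by fun_prop) (dP_cont hL (by fun_prop) (by fun_prop))).sub
    (innerSL_cont (by fun_prop) (dP_cont hL (by fun_prop) (by fun_prop)))).sub ?_
  refine continuous_parametric_intervalIntegral_of_continuous (a₀ := 0) (s := fun z : ℝ × (E × E) => z.1)
    (f := fun (z : ℝ × (E × E)) s => (innerSL ℝ (dS U s z.2.2)).comp (dP L s z.2.1)) ?_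
    continuous_fst
  exact innerSL_cont (dS_cont hU (by fun_prop) (by fun_prop))
    (dP_cont hL (by fun_prop) (by fun_prop))

lemma QQ_cont (hL : ContDiff ℝ 1 L) (hU : ContDiff ℝ 1 U) :
    Continuous fun z : ℝ × (E × E) => QQ L U z.1 z.2 := by
  refine continuous_parametric_intervalIntegral_of_continuous (a₀ := 0) (s := fun z : ℝ × (E × E) => z.1)
    (f := fun (z : ℝ × (E × E)) s => (innerSL ℝ (dS L s z.2.1)).comp (dP U s z.2.2)) ?_
    continuous_fst
  exact innerSL_cont (dS_cont hL (by fun_prop) (by fun_prop))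
    (dP_cont hU (by fun_prop) (by fun_prop))

def DD (L U : ℝ × E → V) (z : ℝ × (E × E)) : ℝ × (E × E) →L[ℝ] ℝ :=
  (ContinuousLinearMap.toSpanSingleton ℝ ⟪dS L z.1 z.2.1, U (z.1, z.2.2)⟫).coprod
    ((PP L U z.1 z.2).coprod (QQ L U z.1 z.2))

lemma coprod_cont {X E₁ E₂ : Type*} [TopologicalSpace X] [NormedAddCommGroup E₁]
    [NormedSpace ℝ E₁] [NormedAddCommGroup E₂] [NormedSpace ℝ E₂]
    {g : X → E₁ →L[ℝ] ℝ} {h : X → E₂ →L[ℝ] ℝ} (hg : Continuous g) (hh : Continuous h) :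
    Continuous fun z => (g z).coprod (h z) := by
  have : (fun z => (g z).coprod (h z)) = fun z =>
      (g z).comp (ContinuousLinearMap.fst ℝ E₁ E₂) + (h z).comp (ContinuousLinearMap.snd ℝ E₁ E₂) := by
    ext <;> simp
  rw [this]
  exact (hg.clm_comp continuous_const).add (hh.clm_comp continuous_const)

lemma integrand_cont (hL : ContDiff ℝ 1 L) (hU : ContDiff ℝ 1 U) :
    Continuous fun z : ℝ × (E × E) => ⟪dS L z.1 z.2.1, U (z.1, z.2.2)⟫ := by
  have cU := hU.continuous
  exact (dS_cont hL (by fun_prop) (by fun_prop)).inner (by fun_prop)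

lemma span_cont (hL : ContDiff ℝ 1 L) (hU : ContDiff ℝ 1 U) :
    Continuous fun z : ℝ × (E × E) =>
      ContinuousLinearMap.toSpanSingleton ℝ ⟪dS L z.1 z.2.1, U (z.1, z.2.2)⟫ :=
  (ContinuousLinearMap.toSpanSingletonCLE (𝕜 := ℝ) (E := ℝ)).continuous.comp
    (integrand_cont hL hU)

lemma DD_has (hL : ContDiff ℝ 1 L) (hU : ContDiff ℝ 1 U) (z : ℝ × (E × E)) :
    HasFDerivAt (fun z : ℝ × (E × E) => KK L U z.1 z.2) (DD L U z) z := by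
  refine aux_partial (KK L U)
    (fun a w => ContinuousLinearMap.toSpanSingleton ℝ ⟪dS L a w.1, U (a, w.2)⟫)
    (fun a w => (PP L U a w).coprod (QQ L U a w)) ?_ ?_ (span_cont hL hU)
    (coprod_cont (PP_cont hL hU) (QQ_cont hL hU)) z
  · intro a w
    have c : Continuous fun s => ⟪dS L s w.1, U (s, w.2)⟫ :=
      (integrand_cont hL hU).comp (by fun_prop : Continuous fun s : ℝ => (s, w))
    have h := (c.integral_hasStrictDerivAt 0 a).hasDerivAt
    rw [hasDerivAt_iff_hasFDerivAt] at h
    exact h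
  · intro a w
    have k1 : Continuous fun w : E × E => PP L U a (w.1, w.2) :=
      Continuous.comp (g := fun z : ℝ × (E × E) => PP L U z.1 z.2)
        (f := fun w : E × E => (a, w)) (PP_cont hL hU) (Continuous.prodMk_right a)
    have k2 : Continuous fun w : E × E => QQ L U a (w.1, w.2) :=
      Continuous.comp (g := fun z : ℝ × (E × E) => QQ L U z.1 z.2)
        (f := fun w : E × E => (a, w)) (QQ_cont hL hU) (Continuous.prodMk_right a)
    have h := aux_partial (fun p q => KK L U a (p, q)) (fun p q => PP L U a (p, q))
      (fun p q => QQ L U a (p, q)) (PP_has hL hU a) (QQ_has hL hU a) k1 k2 w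
    exact h

lemma KK_contDiff (hL : ContDiff ℝ 1 L) (hU : ContDiff ℝ 1 U) :
    ContDiff ℝ 1 (fun z : ℝ × (E × E) => KK L U z.1 z.2) :=
  contDiff_one_iff_hasFDerivAt.2 ⟨DD L U, coprod_cont (span_cont hL hU)
    (coprod_cont (PP_cont hL hU) (QQ_cont hL hU)), DD_has hL hU⟩

lemma DD_diag (hL : ContDiff ℝ 1 L) (hU : ContDiff ℝ 1 U) (a c : ℝ) (p e : E) :
    DD L U (a, p, p) (c, e, e) = c * ⟪dS L a p, U (a, p)⟫
      + (⟪dP L a p e, U (a, p)⟫ - ⟪dP L 0 p e, U (0, p)⟫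
        + ∫ s in (0 : ℝ)..a, (⟪dS L s p, dP U s p e⟫ - ⟪dP L s p e, dS U s p⟫)) := by
  have c1 : Continuous fun s => (innerSL ℝ (dS U s p)).comp (dP L s p) :=
    innerSL_cont (dS_cont hU (by fun_prop) (by fun_prop)) (dP_cont hL (by fun_prop) (by fun_prop))
  have c2 : Continuous fun s => (innerSL ℝ (dS L s p)).comp (dP U s p) :=
    innerSL_cont (dS_cont hL (by fun_prop) (by fun_prop)) (dP_cont hU (by fun_prop) (by fun_prop))
  have e1 := ContinuousLinearMap.intervalIntegral_apply (c1.intervalIntegrable (μ := volume) 0 a) e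
  have e2 := ContinuousLinearMap.intervalIntegral_apply (c2.intervalIntegrable (μ := volume) 0 a) e
  have c1' : Continuous fun s => ⟪dS U s p, dP L s p e⟫ := c1.clm_apply continuous_const
  have c2' : Continuous fun s => ⟪dS L s p, dP U s p e⟫ := c2.clm_apply continuous_const
  have e3 : (∫ s in (0 : ℝ)..a, (⟪dS L s p, dP U s p e⟫ - ⟪dP L s p e, dS U s p⟫)) =
      (∫ s in (0 : ℝ)..a, ⟪dS L s p, dP U s p e⟫) - ∫ s in (0 : ℝ)..a, ⟪dS U s p, dP L s p e⟫ := by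
    rw [← intervalIntegral.integral_sub (c2'.intervalIntegrable _ _) (c1'.intervalIntegrable _ _)]
    refine intervalIntegral.integral_congr fun s _ => ?_
    simp only [real_inner_comm (dS U s p)]
  rw [e3]
  simp only [ContinuousLinearMap.comp_apply, innerSL_apply_apply] at e1 e2
  simp only [DD, PP, QQ, ContinuousLinearMap.coprod_apply, _root_.sub_apply,
    ContinuousLinearMap.toSpanSingleton_apply, ContinuousLinearMap.comp_apply,
    innerSL_apply_apply, smul_eq_mul]
  rw [← e1, ← e2, real_inner_comm (dP L a p e), real_inner_comm (dP L 0 p e)]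
  ring

end main

/-- differentiation of a parameter-dependent integral with
state-dependent lower limit.  Subscripts denote partial derivatives:
`l_s = ∂₁ l`, `l_x̄ = ∂₃ l`, etc. -/
theorem statement8
    (n : ℕ) (f : ℝ → ℝ → ℝ)
    (l u : ℝ → ℝ → ℝ → EuclideanSpace ℝ (Fin n))
    (hf : ContDiff ℝ 1 (fun q : ℝ × ℝ => f q.1 q.2))
    (hl : ContDiff ℝ 1 (fun q : ℝ × ℝ × ℝ => l q.1 q.2.1 q.2.2))
    (hu : ContDiff ℝ 1 (fun q : ℝ × ℝ × ℝ => u q.1 q.2.1 q.2.2))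
    (hls : Continuous (fun q : ℝ × ℝ × ℝ =>
      deriv (fun s' => l s' q.2.1 q.2.2) q.1))
    (hlx : Continuous (fun q : ℝ × ℝ × ℝ =>
      deriv (fun x' => l q.1 q.2.1 x') q.2.2))
    (hus : Continuous (fun q : ℝ × ℝ × ℝ =>
      deriv (fun s' => u s' q.2.1 q.2.2) q.1))
    (hux : Continuous (fun q : ℝ × ℝ × ℝ =>
      deriv (fun x' => u q.1 q.2.1 x') q.2.2))
    (I : ℝ → ℝ → ℝ)
    (hI : ∀ t x, I t x =
      ∫ σ in f t x..t, ⟪deriv (fun s' => l s' t x) σ, u σ t x⟫) :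
    ContDiff ℝ 1 (fun q : ℝ × ℝ => I q.1 q.2) ∧
    ∀ t x : ℝ,
      deriv (fun x' => I t x') x =
        (∫ σ in f t x..t,
          (⟪deriv (fun s' => l s' t x) σ, deriv (fun x' => u σ t x') x⟫ -
            ⟪deriv (fun x' => l σ t x') x, deriv (fun s' => u s' t x) σ⟫)) -
        ⟪deriv (fun s' => l s' t x) (f t x), u (f t x) t x⟫ *
          deriv (fun x' => f t x') x +
        ⟪deriv (fun x' => l t t x') x, u t t x⟫ -
        ⟪deriv (fun x' => l (f t x) t x') x, u (f t x) t x⟫ := by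
  set L : ℝ × (ℝ × ℝ) → EuclideanSpace ℝ (Fin n) := fun q => l q.1 q.2.1 q.2.2 with hLdef
  set U : ℝ × (ℝ × ℝ) → EuclideanSpace ℝ (Fin n) := fun q => u q.1 q.2.1 q.2.2 with hUdef
  have ls : ∀ s t x, deriv (fun s' => l s' t x) s = dS L s (t, x) :=
    fun s t x => (dS_has hl s (t, x)).deriv
  have us : ∀ s t x, deriv (fun s' => u s' t x) s = dS U s (t, x) :=
    fun s t x => (dS_has hu s (t, x)).deriv
  have lx : ∀ s t x, deriv (fun x' => l s t x') x = dP L s (t, x) (0, 1) :=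
    fun s t x => ((dP_has hl s (t, x)).comp_hasDerivAt x
      ((hasDerivAt_const x t).prodMk (hasDerivAt_id x))).deriv
  have ux : ∀ s t x, deriv (fun x' => u s t x') x = dP U s (t, x) (0, 1) :=
    fun s t x => ((dP_has hu s (t, x)).comp_hasDerivAt x
      ((hasDerivAt_const x t).prodMk (hasDerivAt_id x))).deriv
  have hIK : ∀ t x, I t x = KK L U t ((t, x), (t, x)) - KK L U (f t x) ((t, x), (t, x)) := by
    intro t x
    have c : Continuous fun s => ⟪dS L s (t, x), U (s, (t, x))⟫ :=
      (integrand_cont hl hu).comp (by fun_prop : Continuous fun s : ℝ => (s, ((t, x), (t, x))))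
    rw [hI, KK, KK, intervalIntegral.integral_interval_sub_left (c.intervalIntegrable _ _)
      (c.intervalIntegrable _ _)]
    simp only [ls, hUdef]
  have hK := KK_contDiff hl hu
  constructor
  · simp only [hIK]
    refine ContDiff.sub (hK.comp (g := fun z : ℝ × ((ℝ × ℝ) × (ℝ × ℝ)) => KK L U z.1 z.2)
      (f := fun q : ℝ × ℝ => (q.1, (q, q))) (by fun_prop))
      (hK.comp (g := fun z : ℝ × ((ℝ × ℝ) × (ℝ × ℝ)) => KK L U z.1 z.2)
      (f := fun q : ℝ × ℝ => (f q.1 q.2, (q, q))) (by fun_prop))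
  · intro t x
    have hfx : HasDerivAt (fun x' => f t x') (deriv (fun x' => f t x') x) x := by
      refine DifferentiableAt.hasDerivAt ?_
      exact (hf.differentiable one_ne_zero (t, x)).comp x
        (f := fun x' : ℝ => (t, x')) (by fun_prop)
    have hp : HasDerivAt (fun x' : ℝ => (t, x')) ((0 : ℝ), (1 : ℝ)) x :=
      (hasDerivAt_const x t).prodMk (hasDerivAt_id x)
    have d1 := (DD_has hl hu (t, ((t, x), (t, x)))).comp_hasDerivAt x
      ((hasDerivAt_const x t).prodMk (hp.prodMk hp))
    have d2 := (DD_has hl hu (f t x, ((t, x), (t, x)))).comp_hasDerivAt x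
      (hfx.prodMk (hp.prodMk hp))
    have d : HasDerivAt (fun x' => I t x') _ x :=
      (d1.sub d2).congr_of_eventuallyEq (Filter.Eventually.of_forall fun x' => hIK t x')
    rw [d.deriv, DD_diag hl hu, DD_diag hl hu]
    have c : Continuous fun s => ⟪dS L s (t, x), dP U s (t, x) (0, 1)⟫ -
        ⟪dP L s (t, x) (0, 1), dS U s (t, x)⟫ := by
      refine Continuous.sub (Continuous.inner ?_ ?_) (Continuous.inner ?_ ?_)
      · exact dS_cont hl (by fun_prop) (by fun_prop)
      · exact (dP_cont hu (by fun_prop) (by fun_prop)).clm_apply continuous_const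
      · exact (dP_cont hl (by fun_prop) (by fun_prop)).clm_apply continuous_const
      · exact dS_cont hu (by fun_prop) (by fun_prop)
    simp only [ls, us, lx, ux]
    rw [← intervalIntegral.integral_interval_sub_left (c.intervalIntegrable 0 t)
      (c.intervalIntegrable 0 (f t x))]
    simp only [hUdef]
    ring
end
end

section
/- Let α, β > 0, m ∈ (1/2, 1], and let Y_ν ∈ C⁰([0,T]) be nonnegative for ν ∈ ℕ₀. If Y₀(t) ≤ α for all t ∈ [0,T] and Y_{ν+1}(t) ≤ α m^ν + β ∫₀ᵗ Y_ν(s) ds + (1/2) Y_ν(t) for all t ∈ [0,T] and all ν ∈ ℕ₀, then Y_ν(t) ≤ m^ν K e^{γ t} for all t ∈ [0,T] and all ν ∈ ℕ, where K = 2α/(2m − 1) and γ = 2β/(2m − 1). -/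
open Set intervalIntegral

noncomputable section

/-- a Gronwall-type iteration lemma.  If `Y₀ ≤ α` and
`Y_{ν+1}(t) ≤ α mᵛ + β ∫₀ᵗ Y_ν + ½ Y_ν(t)`, then
`Y_ν(t) ≤ mᵛ K e^{γt}` with `K = 2α/(2m-1)`, `γ = 2β/(2m-1)`. -/
theorem statement9
    (T α β m : ℝ) (hT : 0 ≤ T) (hα : 0 < α) (hβ : 0 < β)
    (hm : m ∈ Ioc (1/2 : ℝ) 1)
    (Y : ℕ → ℝ → ℝ)
    (hYcont : ∀ ν, ContinuousOn (Y ν) (Icc 0 T))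
    (hYnonneg : ∀ ν, ∀ t ∈ Icc (0:ℝ) T, 0 ≤ Y ν t)
    (hY0 : ∀ t ∈ Icc (0:ℝ) T, Y 0 t ≤ α)
    (hYrec : ∀ ν : ℕ, ∀ t ∈ Icc (0:ℝ) T,
      Y (ν + 1) t ≤ α * m ^ ν + β * (∫ σ in (0:ℝ)..t, Y ν σ) + (1/2) * Y ν t) :
    ∀ ν : ℕ, 1 ≤ ν → ∀ t ∈ Icc (0:ℝ) T,
      Y ν t ≤ m ^ ν * (2 * α / (2 * m - 1)) * Real.exp (2 * β / (2 * m - 1) * t) := by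
  obtain ⟨hm1, hm2⟩ := hm
  have hd : 0 < 2 * m - 1 := by linarith
  have hγ : 0 < 2 * β / (2 * m - 1) := by positivity
  have key : ∀ ν : ℕ, ∀ t ∈ Icc (0:ℝ) T,
      Y ν t ≤ m ^ ν * (2 * α / (2 * m - 1)) * Real.exp (2 * β / (2 * m - 1) * t) := by
    intro ν
    induction ν with
    | zero =>
      intro t ht
      have h1 : α ≤ 2 * α / (2 * m - 1) := by
        rw [le_div_iff₀ hd]; nlinarith
      have h2 : 1 ≤ Real.exp (2 * β / (2 * m - 1) * t) :=
        Real.one_le_exp (mul_nonneg hγ.le ht.1)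
      have h3 := hY0 t ht
      rw [pow_zero, one_mul]
      nlinarith
    | succ n ih =>
      intro t ht
      have hder : ∀ x ∈ uIcc (0:ℝ) t, HasDerivAt
          (fun s => m ^ n * (α / β) * Real.exp (2 * β / (2 * m - 1) * s))
          (m ^ n * (2 * α / (2 * m - 1)) * Real.exp (2 * β / (2 * m - 1) * x)) x := by
        intro x _
        have h0 : HasDerivAt (fun s : ℝ => 2 * β / (2 * m - 1) * s)
            (2 * β / (2 * m - 1)) x := by
          simpa using (hasDerivAt_id x).const_mul (2 * β / (2 * m - 1))
        have h := h0.exp.const_mul (m ^ n * (α / β))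
        have he : m ^ n * (α / β) * (Real.exp (2 * β / (2 * m - 1) * x) * (2 * β / (2 * m - 1)))
            = m ^ n * (2 * α / (2 * m - 1)) * Real.exp (2 * β / (2 * m - 1) * x) := by
          generalize Real.exp (2 * β / (2 * m - 1) * x) = E
          field_simp
        rw [he] at h
        exact h
      have hc : Continuous (fun x : ℝ =>
          m ^ n * (2 * α / (2 * m - 1)) * Real.exp (2 * β / (2 * m - 1) * x)) := by
        fun_prop
      have hint := integral_eq_sub_of_hasDerivAt hder (hc.intervalIntegrable 0 t)
      have hYi : IntervalIntegrable (Y n) MeasureTheory.volume 0 t := by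
        apply ContinuousOn.intervalIntegrable
        rw [uIcc_of_le ht.1]
        exact (hYcont n).mono (Icc_subset_Icc_right ht.2)
      have hle := integral_mono_on ht.1 hYi (hc.intervalIntegrable 0 t)
        (fun x hx => ih x ⟨hx.1, hx.2.trans ht.2⟩)
      rw [hint] at hle
      have h1 := hYrec n t ht
      have h2 := ih t ht
      have h3 := mul_le_mul_of_nonneg_left hle hβ.le
      refine h1.trans ((add_le_add (add_le_add le_rfl h3)
        (mul_le_mul_of_nonneg_left h2 (by norm_num))).trans (le_of_eq ?_))
      simp only [mul_zero, Real.exp_zero]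
      generalize Real.exp (2 * β / (2 * m - 1) * t) = E
      rw [pow_succ]
      field_simp
      ring
  exact fun ν _ => key ν
end
end
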